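/- arXiv:1811.02550 — 2 statements merged into one kernel-verified Lean document; each statement's English description precedes it below -/
import Mathlib

section
/- For coprime positive integers a and b, the average number of boxes over all simultaneous (a,b)-core partitions equals (a-1)(b-1)(a+b+1)/24. -/
/-- The hook length of the cell `(i, j)` of a Young diagram. -/
def YoungDiagram.hookLength (d : YoungDiagram) (i j : ℕ) : ℕ :=
  (d.rowLen i - j) + (d.colLen j - i) - 1

/-- A Young diagram (partition) is an `a`-core if none of its hook lengths equals `a`. -/
def YoungDiagram.IsCore (d : YoungDiagram) (a : ℕ) : Prop :=
  ∀ c ∈ d.cells, d.hookLength c.1 c.2 ≠ a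

/-!
Encode a partition `d` by its Maya diagram, a set of beads on the integer line. Hook lengths are the
distances from a bead down to a gap, so `d` is an `a`-core exactly when its beads are closed under
subtracting `a`, that is, when each residue class `r` modulo `a` is filled with beads up to some
first gap `h r`. Comparing power sums of the beads and of their `a`-shifts shows that `∑ h r`
depends on `a` only, and that `∑ (h r) ^ 2` equals `2 * a * |d|` up to such a constant.

An `a`-core is a `b`-core if and only if `h (r + b) ≤ h r + b`. Going once around the residues
`r, r + b, r + 2 * b, …`, the defects of these inequalities divided by `a` form a composition of
`b` into `a` nonnegative parts, and the pair `(d, r)` can be recovered from it because `∑ h r` is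
known. Hence simultaneous cores with a marked residue correspond to compositions, and the average
size is governed by the average of `∑ (h s - h r) ^ 2`, which is a sum of variances of partial sums
of a uniformly random composition.
-/

namespace SimultaneousCore

open Finset

section PowerSums

lemma two_mul_sum_range_cast (n : ℕ) : 2 * ∑ i ∈ range n, (i : ℤ) = n * (n - 1) := by
  induction n with
  | zero => simp
  | succ n ih =>
    rw [sum_range_succ, mul_add, ih]
    push_cast
    ring

lemma six_mul_sum_range_cast_sq (n : ℕ) :
    6 * ∑ i ∈ range n, (i : ℤ) ^ 2 = n * (n - 1) * (2 * n - 1) := by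
  induction n with
  | zero => simp
  | succ n ih =>
    rw [sum_range_succ, mul_add, ih]
    push_cast
    ring

lemma six_mul_sum_range_mul_sub (n : ℕ) :
    6 * ∑ i ∈ range n, (i : ℤ) * (n - i) = n * (n ^ 2 - 1) := by
  simp only [mul_sub, ← sq, sum_sub_distrib, ← sum_mul]
  linear_combination 3 * n * two_mul_sum_range_cast n - six_mul_sum_range_cast_sq n

end PowerSums

section Compositions

variable {ι : Type*} [DecidableEq ι] {s : Finset ι} {i j : ι}

lemma sum_piAntidiag_succ {M : Type*} [AddCommMonoid M] (hi : i ∈ s) (n : ℕ) {f : (ι → ℕ) → M}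
    (hf : ∀ z, z i = 0 → f z = 0) :
    ∑ z ∈ piAntidiag s (n + 1), f z = ∑ w ∈ piAntidiag s n, f (w + Pi.single i 1) := by
  refine Eq.trans (Eq.symm ?_) (sum_map (piAntidiag s n) (addRightEmbedding (Pi.single i 1)) f)
  refine sum_subset (fun z hz => ?_) fun z hz hz' => hf z ?_
  · obtain ⟨w, hw, rfl⟩ := mem_map.1 hz
    obtain ⟨hsum, hsupp⟩ := mem_piAntidiag.1 hw
    refine mem_piAntidiag.2 ⟨by simp [sum_add_distrib, sum_pi_single', hi, hsum], fun k hk => ?_⟩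
    by_contra hks
    have hki : k ≠ i := fun h => hks (h ▸ hi)
    exact hks (hsupp k (by simpa [hki] using hk))
  · rw [mem_piAntidiag] at hz
    by_contra hzi
    have hle : Pi.single i 1 ≤ z := fun k => by
      rcases eq_or_ne k i with rfl | hk
      · simpa [Nat.one_le_iff_ne_zero] using hzi
      · simp [hk]
    refine hz' (mem_map.2 ⟨z - Pi.single i 1, ?_, tsub_add_cancel_of_le hle⟩)
    refine mem_piAntidiag.2 ⟨?_, fun k hk => hz.2 k fun h => hk (by simp [h])⟩
    simp only [Pi.sub_apply]
    rw [sum_tsub_distrib _ fun k _ => hle k, hz.1]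
    simp [sum_pi_single', hi]

/- Both sides move a unit between the parts `i` and `j`: substitute `z = w + Pi.single j 1` on the
left and `z = w + Pi.single i 1` on the right. -/
lemma sum_piAntidiag_exchange {R : Type*} [CommSemiring R] (hi : i ∈ s) (hj : j ∈ s) (hij : i ≠ j)
    (n : ℕ) (u : ℕ → R) :
    ∑ z ∈ piAntidiag s n, (z j : R) * (z i + 1) * u (z i)
      = ∑ z ∈ piAntidiag s n, (z i : R) * (z j + 1) * u (z i - 1) := by
  cases n with
  | zero => simp
  | succ n =>
    rw [sum_piAntidiag_succ hj n (by simp +contextual),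
      sum_piAntidiag_succ hi n (by simp +contextual)]
    refine sum_congr rfl fun w _ => ?_
    simp only [Pi.add_apply, Pi.single_eq_same, Pi.single_eq_of_ne hij,
      Pi.single_eq_of_ne hij.symm]
    push_cast
    simp only [add_zero]
    ring

lemma sum_piAntidiag_apply_eq (hi : i ∈ s) (hj : j ∈ s) (n : ℕ) :
    ∑ z ∈ piAntidiag s n, (z i : ℤ) = ∑ z ∈ piAntidiag s n, (z j : ℤ) := by
  rcases eq_or_ne i j with rfl | hij
  · rfl
  have exchange := sum_piAntidiag_exchange (R := ℤ) hi hj hij n fun _ => 1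
  simp only [mul_add, mul_one, sum_add_distrib, mul_comm] at exchange
  linarith

lemma two_mul_sum_piAntidiag_mul (hi : i ∈ s) (hj : j ∈ s) (hij : i ≠ j) (n : ℕ) :
    2 * ∑ z ∈ piAntidiag s n, (z i : ℤ) * z j
      = ∑ z ∈ piAntidiag s n, (z i : ℤ) ^ 2 - ∑ z ∈ piAntidiag s n, (z i : ℤ) := by
  have exchange := sum_piAntidiag_exchange (R := ℤ) hi hj hij n Nat.cast
  rw [← sub_eq_zero, ← sum_sub_distrib] at exchange
  rw [mul_sum, ← sub_eq_zero, ← sum_sub_distrib, ← sum_sub_distrib, ← exchange]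
  refine sum_congr rfl fun z _ => ?_
  cases z i with
  | zero => simp
  | succ m => simp only [add_tsub_cancel_right]; push_cast; ring

lemma sum_cast_of_mem_piAntidiag {n : ℕ} {z : ι → ℕ} (hz : z ∈ piAntidiag s n) :
    ∑ k ∈ s, (z k : ℤ) = n := by
  exact_mod_cast (mem_piAntidiag.1 hz).1

lemma card_mul_sum_piAntidiag_apply (hi : i ∈ s) (n : ℕ) :
    #s * ∑ z ∈ piAntidiag s n, (z i : ℤ) = n * #(piAntidiag s n) := by
  calc #s * ∑ z ∈ piAntidiag s n, (z i : ℤ)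
      = ∑ j ∈ s, ∑ z ∈ piAntidiag s n, (z j : ℤ) := by
        rw [sum_congr rfl fun j hj => sum_piAntidiag_apply_eq hj hi n, sum_const, nsmul_eq_mul]
    _ = ∑ _z ∈ piAntidiag s n, (n : ℤ) := by
        rw [sum_comm]
        exact sum_congr rfl fun z hz => sum_cast_of_mem_piAntidiag hz
    _ = n * #(piAntidiag s n) := by rw [sum_const, nsmul_eq_mul, mul_comm]

lemma card_add_one_mul_sum_piAntidiag_sq (hi : i ∈ s) (n : ℕ) :
    (#s + 1) * ∑ z ∈ piAntidiag s n, (z i : ℤ) ^ 2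
      = (2 * n + #s - 1) * ∑ z ∈ piAntidiag s n, (z i : ℤ) := by
  set m₁ := ∑ z ∈ piAntidiag s n, (z i : ℤ) with hm₁
  set m₂ := ∑ z ∈ piAntidiag s n, (z i : ℤ) ^ 2 with hm₂
  have row_sum : ∑ j ∈ s, ∑ z ∈ piAntidiag s n, (z i : ℤ) * z j = n * m₁ := by
    rw [sum_comm, hm₁, mul_sum]
    refine sum_congr rfl fun z hz => ?_
    rw [← mul_sum, sum_cast_of_mem_piAntidiag hz, mul_comm]
  have off_diagonal : ∑ j ∈ s.erase i, 2 * ∑ z ∈ piAntidiag s n, (z i : ℤ) * z j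
      = (#s - 1) * (m₂ - m₁) := by
    rw [sum_congr rfl fun j hj =>
      two_mul_sum_piAntidiag_mul hi (mem_of_mem_erase hj) (ne_of_mem_erase hj).symm n]
    rw [sum_const, nsmul_eq_mul, cast_card_erase_of_mem hi]
  rw [← add_sum_erase _ _ hi] at row_sum
  rw [← mul_sum] at off_diagonal
  simp only [← sq, ← hm₂] at row_sum
  linear_combination 2 * row_sum - off_diagonal

lemma card_add_one_mul_covariance_piAntidiag (hi : i ∈ s) (hj : j ∈ s) (n : ℕ) :
    (#s + 1) * ∑ z ∈ piAntidiag s n, ((n : ℤ) - #s * z i) * (n - #s * z j)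
      = n * (n + #s) * #(piAntidiag s n) * ((if i = j then (#s : ℤ) else 0) - 1) := by
  have mean_i := card_mul_sum_piAntidiag_apply hi n
  have mean_j := card_mul_sum_piAntidiag_apply hj n
  have second_i := card_add_one_mul_sum_piAntidiag_sq hi n
  have expand : ∑ z ∈ piAntidiag s n, ((n : ℤ) - #s * z i) * (n - #s * z j)
      = n ^ 2 * #(piAntidiag s n) - n * (#s * ∑ z ∈ piAntidiag s n, (z i : ℤ))
        - n * (#s * ∑ z ∈ piAntidiag s n, (z j : ℤ))
        + #s ^ 2 * ∑ z ∈ piAntidiag s n, (z i : ℤ) * z j := by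
    rw [mul_comm _ (#(piAntidiag s n) : ℤ), ← nsmul_eq_mul, ← sum_const]
    simp only [mul_sum, ← sum_sub_distrib, ← sum_add_distrib]
    exact sum_congr rfl fun z _ => by ring
  rw [expand, mean_i, mean_j]
  split_ifs with hij
  · subst hij
    simp only [← sq]
    linear_combination (#s : ℤ) ^ 2 * second_i + #s * (2 * n + #s - 1) * mean_i
  · have mixed := two_mul_sum_piAntidiag_mul hi hj hij n
    apply mul_left_cancel₀ (two_ne_zero (α := ℤ))
    linear_combination (#s : ℤ) ^ 2 * (#s + 1) * mixed + (#s : ℤ) ^ 2 * second_i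
      + #s * (2 * n + #s - 1 - (#s + 1)) * mean_i

lemma card_add_one_mul_variance_piAntidiag {t : Finset ι} (hts : t ⊆ s) (n : ℕ) :
    (#s + 1) * ∑ z ∈ piAntidiag s n, (∑ k ∈ t, ((n : ℤ) - #s * z k)) ^ 2
      = #t * (#s - #t) * n * (n + #s) * #(piAntidiag s n) := by
  have expand : ∑ z ∈ piAntidiag s n, (∑ k ∈ t, ((n : ℤ) - #s * z k)) ^ 2
      = ∑ i ∈ t, ∑ j ∈ t, ∑ z ∈ piAntidiag s n, ((n : ℤ) - #s * z i) * (n - #s * z j) := by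
    simp_rw [sq, sum_mul_sum]
    rw [sum_comm]
    exact sum_congr rfl fun i _ => sum_comm
  rw [expand]
  simp_rw [mul_sum t]
  rw [sum_congr rfl fun i hi => sum_congr rfl fun j hj =>
    card_add_one_mul_covariance_piAntidiag (hts hi) (hts hj) n]
  simp only [← mul_sum, sum_sub_distrib, sum_ite_eq, sum_const, nsmul_eq_mul]
  rw [sum_ite_mem, inter_self, sum_const, nsmul_eq_mul]
  ring

end Compositions

section Beads

variable {d : YoungDiagram} {i j : ℕ} {n : ℤ}

/-- The positions of the beads of `d` on the integer line (its Maya diagram). The row of index `i`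
contributes the bead `d.rowLen i - i - 1`, so the empty diagram has a bead at every negative
integer. -/
def beadPos (d : YoungDiagram) (i : ℕ) : ℤ := d.rowLen i - i - 1

/-- The positions of the gaps between the beads of `d`, one for each column index `j`. -/
def gapPos (d : YoungDiagram) (j : ℕ) : ℤ := j - d.colLen j

/-- The bead set (Maya diagram) of `d`, as a set of integers. -/
def beads (d : YoungDiagram) : Set ℤ := Set.range (beadPos d)

lemma beadPos_strictAnti (d : YoungDiagram) : StrictAnti (beadPos d) :=
  strictAnti_nat_of_succ_lt fun i => by
    have := d.rowLen_anti i (i + 1) i.le_succ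
    simp only [beadPos]
    omega

lemma beads_injective : Function.Injective beads := by
  intro d e h
  have hpos : OrderDual.toDual ∘ beadPos d = OrderDual.toDual ∘ beadPos e := by
    refine ((beadPos_strictAnti d).dual_right.range_inj (beadPos_strictAnti e).dual_right).1 ?_
    rw [Set.range_comp, Set.range_comp]
    exact congrArg _ h
  ext ⟨i, j⟩
  have hi : beadPos d i = beadPos e i := congrFun hpos i
  simp only [beadPos] at hi
  rw [YoungDiagram.mem_cells, YoungDiagram.mem_cells, YoungDiagram.mem_iff_lt_rowLen,
    YoungDiagram.mem_iff_lt_rowLen]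
  omega

lemma lt_rowLen_iff_lt_colLen : j < d.rowLen i ↔ i < d.colLen j :=
  YoungDiagram.mem_iff_lt_rowLen.symm.trans YoungDiagram.mem_iff_lt_colLen

lemma gapPos_lt_beadPos_iff : gapPos d j < beadPos d i ↔ (i, j) ∈ d := by
  have := lt_rowLen_iff_lt_colLen (d := d) (i := i) (j := j)
  rw [YoungDiagram.mem_iff_lt_rowLen]
  simp only [gapPos, beadPos]
  omega

lemma beadPos_ne_gapPos (d : YoungDiagram) (i j : ℕ) : beadPos d i ≠ gapPos d j := by
  have := lt_rowLen_iff_lt_colLen (d := d) (i := i) (j := j)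
  simp only [gapPos, beadPos]
  omega

lemma hookLength_eq_beadPos_sub_gapPos (h : (i, j) ∈ d) :
    (d.hookLength i j : ℤ) = beadPos d i - gapPos d j := by
  have row := YoungDiagram.mem_iff_lt_rowLen.1 h
  have col := YoungDiagram.mem_iff_lt_colLen.1 h
  simp only [YoungDiagram.hookLength, beadPos, gapPos]
  omega

lemma rowLen_eq_zero_iff : d.rowLen i = 0 ↔ d.colLen 0 ≤ i := by
  have := lt_rowLen_iff_lt_colLen (d := d) (i := i) (j := 0)
  omega

lemma neg_colLen_le_beadPos_iff : -(d.colLen 0 : ℤ) ≤ beadPos d i ↔ i < d.colLen 0 := by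
  have := rowLen_eq_zero_iff (d := d) (i := i)
  simp only [beadPos]
  omega

lemma mem_beads_of_lt_neg_colLen (hn : n < -d.colLen 0) : n ∈ beads d := by
  refine ⟨(-n - 1).toNat, ?_⟩
  have : d.rowLen (-n - 1).toNat = 0 := rowLen_eq_zero_iff.2 (by omega)
  simp only [beadPos]
  omega

lemma lt_rowLen_of_mem_beads (hn : n ∈ beads d) : n < d.rowLen 0 := by
  obtain ⟨i, rfl⟩ := hn
  have := d.rowLen_anti 0 i i.zero_le
  simp only [beadPos]
  omega

lemma exists_gapPos_eq_of_notMem_beads (hn : n ∉ beads d) : ∃ j, gapPos d j = n := by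
  classical
  have eventually_lt : ∃ i, beadPos d i < n := by
    have := d.rowLen_anti 0 (d.rowLen 0 - n).toNat (Nat.zero_le _)
    exact ⟨(d.rowLen 0 - n).toNat, by simp only [beadPos]; omega⟩
  let i := Nat.find eventually_lt
  have bead_lt : beadPos d i < n := Nat.find_spec eventually_lt
  have lt_bead : ∀ k < i, n < beadPos d k := fun k hk =>
    lt_of_le_of_ne (not_lt.1 (Nat.find_min eventually_lt hk)) fun h => hn ⟨k, h.symm⟩
  obtain ⟨j, hj⟩ : ∃ j : ℕ, (j : ℤ) = n + i :=
    ⟨(n + i).toNat, by simp only [beadPos] at bead_lt; omega⟩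
  have mem_column_iff : ∀ k, (k, j) ∈ d ↔ k < i := fun k => by
    rw [YoungDiagram.mem_iff_lt_rowLen]
    refine ⟨fun h => ?_, fun h => ?_⟩
    · by_contra hki
      have := d.rowLen_anti i k (not_lt.1 hki)
      simp only [beadPos] at bead_lt
      omega
    · have := d.rowLen_anti k (i - 1) (by omega)
      have := lt_bead (i - 1) (by omega)
      simp only [beadPos] at this
      omega
  have colLen_eq : d.colLen j = i := eq_of_forall_lt_iff fun k => by
    rw [← YoungDiagram.mem_iff_lt_colLen, mem_column_iff]
  exact ⟨j, by simp only [gapPos]; omega⟩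

lemma isCore_iff_forall_sub_mem_beads {a : ℕ} : d.IsCore a ↔ ∀ n ∈ beads d, n - a ∈ beads d := by
  constructor
  · rintro hcore _ ⟨i, rfl⟩
    by_contra hgap
    obtain ⟨j, hj⟩ := exists_gapPos_eq_of_notMem_beads hgap
    have hmem : (i, j) ∈ d :=
      gapPos_lt_beadPos_iff.1 (lt_of_le_of_ne (by omega) (beadPos_ne_gapPos d i j).symm)
    have hook := hookLength_eq_beadPos_sub_gapPos hmem
    exact hcore (i, j) hmem (by simp only; omega)
  · rintro hclosed ⟨i, j⟩ hmem hook
    have := hookLength_eq_beadPos_sub_gapPos ((YoungDiagram.mem_cells _).1 hmem)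
    obtain ⟨k, hk⟩ := hclosed _ ⟨i, rfl⟩
    exact beadPos_ne_gapPos d k j (by simp only at hook; omega)

lemma card_cells_eq_sum_rowLen (d : YoungDiagram) :
    #d.cells = ∑ i ∈ range (d.colLen 0), d.rowLen i := by
  rw [card_eq_sum_card_fiberwise (f := Prod.fst) (t := range (d.colLen 0))]
  · exact sum_congr rfl fun i _ => d.rowLen_eq_card.symm
  · rintro ⟨i, j⟩ hmem
    rw [coe_range, Set.mem_Iio, ← YoungDiagram.mem_iff_lt_colLen]
    exact d.up_left_mem le_rfl j.zero_le hmem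

lemma two_mul_sum_beadPos (d : YoungDiagram) :
    2 * ∑ i ∈ range (d.colLen 0), beadPos d i
      = 2 * #d.cells - d.colLen 0 * (d.colLen 0 + 1) := by
  rw [card_cells_eq_sum_rowLen]
  generalize d.colLen 0 = N
  induction N with
  | zero => simp
  | succ N ih =>
    rw [sum_range_succ, sum_range_succ, mul_add, ih, beadPos]
    push_cast
    ring

lemma exists_rowLen_eq {f : ℕ → ℕ} (hf : Antitone f) (hf₀ : ∃ N, f N = 0) :
    ∃ d : YoungDiagram, ∀ i, d.rowLen i = f i := by
  obtain ⟨N, hN⟩ := hf₀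
  let d := YoungDiagram.ofRowLens (List.ofFn fun i : Fin N => f i)
    (hf.comp_monotone Fin.val_strictMono.monotone).sortedGE_ofFn
  refine ⟨d, fun i => eq_of_forall_lt_iff fun j => ?_⟩
  have := @hf N i
  rw [← YoungDiagram.mem_iff_lt_rowLen, YoungDiagram.mem_ofRowLens]
  simp only [List.length_ofFn, List.getElem_ofFn, exists_prop, and_iff_right_iff_imp]
  omega

lemma exists_beadPos_eq {s : ℕ → ℤ} (hs : StrictAnti s) {c : ℤ}
    (hc : ∀ᶠ i : ℕ in Filter.atTop, s i = c - i - 1) :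
    ∃ d : YoungDiagram, ∀ i, beadPos d i = s i - c := by
  obtain ⟨N, hN⟩ := Filter.eventually_atTop.1 hc
  have anti : Antitone fun i : ℕ => s i - c + i + 1 := antitone_nat_of_succ_le fun i => by
    have := hs (Nat.lt_add_one i)
    push_cast
    omega
  have nonneg : ∀ i : ℕ, 0 ≤ s i - c + i + 1 := fun i => by
    have h := anti (le_max_left i N)
    simp only [hN _ (le_max_right i N)] at h
    omega
  obtain ⟨d, hd⟩ := exists_rowLen_eq (f := fun i => (s i - c + i + 1).toNat)
    (fun i j hij => Int.toNat_le_toNat (anti hij)) ⟨N, by simp only [hN N le_rfl]; omega⟩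
  refine ⟨d, fun i => ?_⟩
  have := nonneg i
  simp only [beadPos, hd]
  omega

lemma exists_strictAnti_range_eq {S : Set ℤ} (hS : BddAbove S) (hinf : S.Infinite) :
    ∃ s : ℕ → ℤ, StrictAnti s ∧ Set.range s = S := by
  obtain ⟨M, hM⟩ := hS
  let p : ℕ → Prop := fun k => M - k ∈ S
  have image_eq : (fun k : ℕ => M - (k : ℤ)) '' {k | p k} = S := by
    ext n
    refine ⟨?_, fun hn => ⟨(M - n).toNat, ?_⟩⟩
    · rintro ⟨k, hk, rfl⟩
      exact hk
    · have hle : n ≤ M := hM hn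
      have : M - ((M - n).toNat : ℤ) = n := by omega
      exact ⟨by simpa only [p, Set.mem_ofPred_eq, this] using hn, this⟩
  have hp : {k | p k}.Infinite := fun hfin => hinf (image_eq ▸ hfin.image _)
  refine ⟨fun i => M - Nat.nth p i, fun i j hij => ?_, ?_⟩
  · have : Nat.nth p i < Nat.nth p j := Nat.nth_strictMono hp hij
    simp only
    omega
  · rw [← image_eq, ← Nat.range_nth_of_infinite hp, ← Set.range_comp]
    rfl

theorem exists_mem_beads_iff_add_mem {S : Set ℤ} (hS : BddAbove S) (hSc : BddBelow Sᶜ) :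
    ∃ (d : YoungDiagram) (c : ℤ), ∀ n, n ∈ beads d ↔ n + c ∈ S := by
  obtain ⟨m, hm⟩ := hSc
  have mem_of_lt : ∀ n < m, n ∈ S := fun n hn => by
    by_contra h
    exact (hm h).not_gt hn
  have hinf : S.Infinite := (Set.Iio_infinite m).mono mem_of_lt
  obtain ⟨s, hs, rfl⟩ := exists_strictAnti_range_eq hS hinf
  obtain ⟨N, hN⟩ := mem_of_lt (m - 1) (by omega)
  have tail : ∀ k : ℕ, s (N + k) = m - 1 - k := by
    intro k
    induction k with
    | zero => simpa using hN
    | succ k ih =>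
      obtain ⟨i, hi⟩ := mem_of_lt (m - 1 - (k + 1)) (by omega)
      have hlt : N + k < i := hs.lt_iff_gt.1 (by omega)
      have hle : s i ≤ s (N + (k + 1)) := hs.antitone (by omega)
      have hlt' : s (N + (k + 1)) < s (N + k) := hs (by omega)
      push_cast
      omega
  obtain ⟨d, hd⟩ := exists_beadPos_eq hs (c := m + N) <| Filter.eventually_atTop.2
    ⟨N, fun i hi => by
      have := tail (i - N)
      rw [Nat.add_sub_cancel' hi] at this
      omega⟩
  refine ⟨d, m + N, fun n => ?_⟩
  simp only [beads, Set.mem_range, hd, sub_eq_iff_eq_add]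

end Beads

section GapFunctions

variable {a b : ℕ} {d : YoungDiagram} {h : ZMod a → ℤ}

/-- `h` is the gap function of `d` modulo `a`: the beads of `d` in the residue class `r` modulo `a`
are exactly the elements of this class lying below `h r`. For `0 < a` such a function exists if and
only if `d` is an `a`-core. -/
structure IsGapFunction (d : YoungDiagram) (h : ZMod a → ℤ) : Prop where
  cast_eq : ∀ r, (h r : ZMod a) = r
  mem_beads_iff : ∀ n : ℤ, n ∈ beads d ↔ n < h n

/-- The least gap of `d` in the residue class `r` modulo `a`; for an `a`-core this is its gap
function. It is junk for `a = 0` when `r` is itself a bead: the class then contains no gap. -/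
noncomputable def firstGap (a : ℕ) (d : YoungDiagram) (r : ZMod a) : ℤ :=
  sInf {n : ℤ | (n : ZMod a) = r ∧ n ∉ beads d}

lemma sub_mul_mem_beads (hd : d.IsCore a) {n : ℤ} (hn : n ∈ beads d) (k : ℕ) :
    n - a * k ∈ beads d := by
  induction k with
  | zero => simpa using hn
  | succ k ih =>
    rw [Nat.cast_succ, mul_add_one, ← sub_sub]
    exact isCore_iff_forall_sub_mem_beads.1 hd _ ih

lemma isLeast_firstGap [NeZero a] (d : YoungDiagram) (r : ZMod a) :
    IsLeast {n : ℤ | (n : ZMod a) = r ∧ n ∉ beads d} (firstGap a d r) := by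
  have bddBelow : BddBelow {n : ℤ | (n : ZMod a) = r ∧ n ∉ beads d} :=
    ⟨-d.colLen 0, fun n hn => not_lt.1 fun hlt => hn.2 (mem_beads_of_lt_neg_colLen hlt)⟩
  refine ⟨Int.csInf_mem ⟨r.val + a * d.rowLen 0, by simp, fun hmem => ?_⟩ bddBelow,
    fun n hn => csInf_le bddBelow hn⟩
  have := lt_rowLen_of_mem_beads hmem
  have : (1 : ℤ) * d.rowLen 0 ≤ a * d.rowLen 0 := by
    gcongr
    exact_mod_cast NeZero.one_le
  omega

lemma isGapFunction_firstGap [NeZero a] (hd : d.IsCore a) : IsGapFunction d (firstGap a d) where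
  cast_eq r := (isLeast_firstGap d r).1.1
  mem_beads_iff n := by
    obtain ⟨⟨hcast, hgap⟩, hle⟩ := isLeast_firstGap d (n : ZMod a)
    refine ⟨fun hn => ?_, fun hlt => ?_⟩
    · by_contra! hge
      obtain ⟨m, hm⟩ := (ZMod.intCast_eq_intCast_iff_dvd_sub _ _ a).1 hcast
      obtain ⟨k, rfl⟩ : ∃ k : ℕ, m = k := Int.eq_ofNat_of_zero_le <|
        nonneg_of_mul_nonneg_right (by omega) (Nat.cast_pos.2 (NeZero.pos a))
      refine hgap ?_
      rw [show firstGap a d n = n - a * k by omega]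
      exact sub_mul_mem_beads hd hn k
    · by_contra hn
      exact hlt.not_ge (hle ⟨rfl, hn⟩)

namespace IsGapFunction

lemma injective (hh : IsGapFunction d h) : Function.Injective h :=
  Function.LeftInverse.injective (g := ((↑) : ℤ → ZMod a)) hh.cast_eq

lemma apply_notMem_beads (hh : IsGapFunction d h) (r : ZMod a) : h r ∉ beads d := by
  rw [hh.mem_beads_iff, hh.cast_eq]
  exact lt_irrefl _

lemma diagram_eq {e : YoungDiagram} (hd : IsGapFunction d h) (he : IsGapFunction e h) : d = e :=
  beads_injective <| Set.ext fun n => (hd.mem_beads_iff n).trans (he.mem_beads_iff n).symm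

lemma eq_firstGap (hh : IsGapFunction d h) : firstGap a d = h := by
  funext r
  refine IsLeast.csInf_eq ⟨⟨hh.cast_eq r, hh.apply_notMem_beads r⟩, ?_⟩
  rintro n ⟨rfl, hn⟩
  rwa [hh.mem_beads_iff, not_lt] at hn

lemma isCore_iff (hh : IsGapFunction d h) : d.IsCore b ↔ ∀ r, h (r + b) ≤ h r + b := by
  rw [isCore_iff_forall_sub_mem_beads]
  constructor
  · intro hclosed r
    by_contra! hlt
    refine hh.apply_notMem_beads r ?_
    simpa using hclosed (h r + b) ((hh.mem_beads_iff _).2 (by simpa [hh.cast_eq] using hlt))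
  · intro hle n hn
    have := hle ((n - b : ℤ) : ZMod a)
    rw [hh.mem_beads_iff] at hn ⊢
    push_cast at this ⊢
    rw [sub_add_cancel] at this
    omega

lemma mem_image_beadPos_iff {n : ℤ} (hh : IsGapFunction d h) :
    n ∈ (range (d.colLen 0)).image (beadPos d) ↔ -d.colLen 0 ≤ n ∧ n < h n := by
  simp only [mem_image, mem_range, ← hh.mem_beads_iff, ← neg_colLen_le_beadPos_iff]
  constructor
  · rintro ⟨i, hi, rfl⟩
    exact ⟨hi, i, rfl⟩
  · rintro ⟨hn, i, rfl⟩
    exact ⟨i, hn, rfl⟩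

lemma neg_colLen_le_apply (hh : IsGapFunction d h) (r : ZMod a) : -d.colLen 0 ≤ h r :=
  not_lt.1 fun hlt => hh.apply_notMem_beads r (mem_beads_of_lt_neg_colLen hlt)

lemma mem_image_univ_iff [NeZero a] (hh : IsGapFunction d h) {n : ℤ} :
    n ∈ univ.image h ↔ n = h n := by
  simp only [mem_image, mem_univ, true_and]
  exact ⟨fun ⟨r, hr⟩ => by rw [← hr, hh.cast_eq], fun hn => ⟨n, hn.symm⟩⟩

lemma sub_lt_iff [NeZero a] (hh : IsGapFunction d h) {n : ℤ} : n - a < h n ↔ n ≤ h n := by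
  have apos : (0 : ℤ) < a := Nat.cast_pos.2 (NeZero.pos a)
  obtain ⟨m, hm⟩ := (ZMod.intCast_eq_intCast_iff_dvd_sub _ _ a).1 (hh.cast_eq n).symm
  refine ⟨fun hlt => ?_, fun hle => by omega⟩
  have : -1 < m := lt_of_mul_lt_mul_left (by linarith) apos.le
  have : 0 ≤ a * m := mul_nonneg apos.le (by omega)
  omega

lemma mem_image_beadPos_add_iff [NeZero a] (hh : IsGapFunction d h) {n : ℤ} :
    n ∈ (range (d.colLen 0)).image (fun i => beadPos d i + a)
      ↔ -d.colLen 0 ≤ n - a ∧ n ≤ h n := by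
  have := hh.mem_image_beadPos_iff (n := n - a)
  simp only [mem_image, eq_sub_iff_add_eq, Int.cast_sub, Int.cast_natCast, CharP.cast_eq_zero,
    sub_zero, hh.sub_lt_iff] at this
  rw [mem_image, this]

/- Both sides sum `F` over the integers `n ≥ -d.colLen 0` with `n ≤ h n`: these are the beads of
index less than `d.colLen 0` together with the first gaps, and also the `a`-shifts of these beads
together with the `a` smallest integers in the range. -/
lemma sum_beadPos_add_sum {M : Type*} [AddCommMonoid M] [NeZero a] (hh : IsGapFunction d h)
    (F : ℤ → M) :
    ∑ i ∈ range (d.colLen 0), F (beadPos d i + a) + ∑ j ∈ range a, F (j - d.colLen 0)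
      = ∑ i ∈ range (d.colLen 0), F (beadPos d i) + ∑ r, F (h r) := by
  set N := d.colLen 0
  have mem_low : ∀ n, n ∈ (range a).image (fun j : ℕ => (j : ℤ) - N) ↔ -N ≤ n ∧ n < a - N :=
    fun n => by
      simp only [mem_image, mem_range]
      exact ⟨fun ⟨j, hj⟩ => by omega, fun hn => ⟨(n + N).toNat, by omega⟩⟩
  have union_eq : (range N).image (fun i => beadPos d i + a) ∪ (range a).image (fun j => ↑j - N)
      = (range N).image (beadPos d) ∪ univ.image h := by
    ext n
    have := hh.neg_colLen_le_apply n
    have := hh.sub_lt_iff (n := n)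
    rw [mem_union, mem_union, hh.mem_image_beadPos_add_iff, mem_low, hh.mem_image_beadPos_iff,
      hh.mem_image_univ_iff]
    omega
  have disj_low : Disjoint ((range N).image (fun i => beadPos d i + a))
      ((range a).image fun j : ℕ => (j : ℤ) - N) :=
    disjoint_left.2 fun n hshift hlow => by
      rw [hh.mem_image_beadPos_add_iff] at hshift
      rw [mem_low] at hlow
      omega
  have disj_gap : Disjoint ((range N).image (beadPos d)) (univ.image h) :=
    disjoint_left.2 fun n hbead hgap =>
      (hh.mem_image_beadPos_iff.1 hbead).2.ne (hh.mem_image_univ_iff.1 hgap)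
  have bead_inj := (beadPos_strictAnti d).injective
  have shift_inj : Function.Injective fun i => beadPos d i + (a : ℤ) :=
    (add_left_injective _).comp bead_inj
  have low_inj : Function.Injective fun j : ℕ => (j : ℤ) - N :=
    (sub_left_injective (b := (N : ℤ))).comp Nat.cast_injective
  rw [← sum_image (f := F) shift_inj.injOn, ← sum_image (f := F) low_inj.injOn,
    ← sum_image (f := F) bead_inj.injOn, ← sum_image (f := F) hh.injective.injOn,
    ← sum_union disj_low, union_eq, sum_union disj_gap]

lemma two_mul_sum [NeZero a] (hh : IsGapFunction d h) : 2 * ∑ r, h r = a * (a - 1) := by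
  have telescope := hh.sum_beadPos_add_sum id
  simp only [id, sum_add_distrib, sum_sub_distrib, sum_const, card_range, nsmul_eq_mul]
    at telescope
  linear_combination two_mul_sum_range_cast a - 2 * telescope

lemma sum_sq [NeZero a] (hh : IsGapFunction d h) :
    ∑ r, h r ^ 2 = 2 * a * #d.cells + ∑ j ∈ range a, (j : ℤ) ^ 2 := by
  have telescope := hh.sum_beadPos_add_sum (· ^ 2)
  simp only [add_sq, sub_sq, sum_add_distrib, sum_sub_distrib, ← sum_mul, ← mul_sum, sum_const,
    card_range, nsmul_eq_mul] at telescope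
  linear_combination a * two_mul_sum_beadPos d - d.colLen 0 * two_mul_sum_range_cast a - telescope

end IsGapFunction

end GapFunctions

section Steps

variable {a b : ℕ} {d : YoungDiagram} {h : ZMod a → ℤ}

@[elab_as_elim]
lemma zmod_induction [NeZero a] {p : ZMod a → Prop} (zero : p 0)
    (add_one : ∀ k, p k → p (k + 1)) (k : ZMod a) : p k := by
  have natCast : ∀ n : ℕ, p n := fun n => by
    induction n with
    | zero => simpa using zero
    | succ n ih => simpa using add_one _ ih
  simpa using natCast k.val

lemma sum_zmod_val_eq_sum_range {M : Type*} [AddCommMonoid M] [NeZero a] (f : ℕ → M) :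
    ∑ r : ZMod a, f r.val = ∑ i ∈ range a, f i := by
  obtain ⟨m, rfl⟩ := Nat.exists_eq_succ_of_ne_zero (NeZero.ne a)
  exact Fin.sum_univ_eq_sum_range f (m + 1)

lemma card_filter_val_lt [NeZero a] (k : ZMod a) : #{x : ZMod a | x.val < k.val} = k.val := by
  rw [card_filter, sum_zmod_val_eq_sum_range fun i => if i < k.val then 1 else 0, ← card_filter,
    show {i ∈ range a | i < k.val} = range k.val from ?_, card_range]
  ext i
  have := k.val_lt
  simp only [mem_filter, mem_range]
  omega

lemma exists_add_mul_eq (hab : a.Coprime b) (r s : ZMod a) : ∃ k, r + k * b = s := by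
  refine ⟨(s - r) * (b : ZMod a)⁻¹, ?_⟩
  rw [mul_right_comm, mul_assoc, ZMod.coe_mul_inv_eq_one b hab.symm, mul_one, add_sub_cancel]

lemma sum_add_mul_eq_sum {M : Type*} [AddCommMonoid M] [NeZero a] (hab : a.Coprime b)
    (r : ZMod a) (f : ZMod a → M) : ∑ k, f (r + k * b) = ∑ s, f s :=
  Equiv.sum_comp ((Units.mulRight (ZMod.unitOfCoprime b hab.symm)).trans (Equiv.addLeft r)) f

/-- The cyclic sequence `h r, h (r + b), h (r + 2 * b), …` read off from the gap function `h` modulo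
`a` of a `b`-core increases by `b` minus a nonnegative multiple of `a` at each step. Here
`steps b h r k` is the multiplicity for the step from `r + k * b` to `r + (k + 1) * b`; together
they form a composition of `b` into `a` nonnegative parts. -/
def steps (b : ℕ) (h : ZMod a → ℤ) (r k : ZMod a) : ℕ :=
  ((h (r + k * b) + b - h (r + (k + 1) * b)) / a).toNat

/-- The increment `h (r + k * b) - h r` of a gap function whose steps from `r` are `z`, where `k` is
represented by one of `0, …, a - 1`. -/
def height [NeZero a] (b : ℕ) (z : ZMod a → ℕ) (k : ZMod a) : ℤ :=
  ∑ x with x.val < k.val, ((b : ℤ) - a * z x)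

lemma height_zero [NeZero a] (z : ZMod a → ℕ) : height b z 0 = 0 := by
  simp [height]

lemma height_add_one [NeZero a] {z : ZMod a → ℕ} (hz : z ∈ piAntidiag univ b) (k : ZMod a) :
    height b z (k + 1) = height b z k + b - a * z k := by
  have filter_le : ({x : ZMod a | x.val ≤ k.val} : Finset (ZMod a))
      = insert k ({x | x.val < k.val} : Finset (ZMod a)) := by
    ext x
    simp [le_iff_eq_or_lt, (ZMod.val_injective a).eq_iff]
  have height_eq : height b z k + (b - a * z k) = ∑ x with x.val ≤ k.val, ((b : ℤ) - a * z x) := by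
    rw [filter_le, sum_insert (by simp), add_comm]
    rfl
  rw [add_sub_assoc, height_eq]
  rcases Nat.lt_or_ge (k.val + 1) a with hlt | hge
  · have val_eq : (k + 1).val = k.val + 1 := by
      rw [ZMod.val_add, ZMod.val_one_eq_one_mod, Nat.add_mod_mod, Nat.mod_eq_of_lt hlt]
    simp only [height, val_eq, Nat.lt_add_one_iff]
  · have val_eq : k.val + 1 = a := le_antisymm k.val_lt hge
    have add_one_eq : k + 1 = 0 := by
      rw [← ZMod.natCast_zmod_val k, ← Nat.cast_add_one, val_eq, ZMod.natCast_self]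
    have filter_eq : ({x : ZMod a | x.val ≤ k.val} : Finset (ZMod a)) = univ :=
      filter_true_of_mem fun x _ => Nat.lt_succ_iff.1 (x.val_lt.trans_eq val_eq.symm)
    rw [add_one_eq, height_zero, filter_eq, sum_sub_distrib, ← mul_sum,
      sum_cast_of_mem_piAntidiag hz]
    simp

lemma cast_height [NeZero a] {z : ZMod a → ℕ} (hz : z ∈ piAntidiag univ b) (k : ZMod a) :
    (height b z k : ZMod a) = k * b := by
  induction k using zmod_induction with
  | zero => simp [height_zero]
  | add_one k ih =>
    rw [height_add_one hz]
    push_cast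
    rw [ih, ZMod.natCast_self]
    ring

namespace IsGapFunction

lemma mul_steps (hh : IsGapFunction d h) (hb : d.IsCore b) (r k : ZMod a) :
    (a : ℤ) * steps b h r k = h (r + k * b) + b - h (r + (k + 1) * b) := by
  have nonneg : 0 ≤ h (r + k * b) + b - h (r + (k + 1) * b) := by
    have := hh.isCore_iff.1 hb (r + k * b)
    rw [add_one_mul, ← add_assoc]
    omega
  have dvd : (a : ℤ) ∣ h (r + k * b) + b - h (r + (k + 1) * b) := by
    rw [← ZMod.intCast_zmod_eq_zero_iff_dvd]
    push_cast
    simp only [hh.cast_eq]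
    ring
  rw [steps, Int.toNat_of_nonneg (Int.ediv_nonneg nonneg a.cast_nonneg), Int.mul_ediv_cancel' dvd]

lemma steps_mem_piAntidiag [NeZero a] (hh : IsGapFunction d h) (hb : d.IsCore b) (r : ZMod a) :
    steps b h r ∈ piAntidiag univ b := by
  have shift : ∑ k, h (r + (k + 1) * b) = ∑ k, h (r + k * b) :=
    Equiv.sum_comp (Equiv.addRight (1 : ZMod a)) fun k => h (r + k * b)
  have total : (a : ℤ) * ∑ k, (steps b h r k : ℤ) = a * b := by
    simp only [mul_sum, hh.mul_steps hb, sum_sub_distrib, sum_add_distrib, shift]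
    simp
  rw [mem_piAntidiag]
  exact ⟨by exact_mod_cast mul_left_cancel₀ (NeZero.ne (a : ℤ)) total, by simp⟩

lemma apply_add_mul [NeZero a] (hh : IsGapFunction d h) (hb : d.IsCore b) (r k : ZMod a) :
    h (r + k * b) = h r + height b (steps b h r) k := by
  induction k using zmod_induction with
  | zero => simp [height_zero]
  | add_one k ih =>
    rw [height_add_one (hh.steps_mem_piAntidiag hb r), hh.mul_steps hb, ih]
    ring

end IsGapFunction

end Steps

section Bijection

variable {a b : ℕ} [NeZero a]

/- The sum of the values of a gap function depends on `a` only, so the increments determine the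
value at the starting point; this value, modulo `a`, is the starting point. -/
lemma IsGapFunction.eq_of_steps_eq (hab : a.Coprime b) {d e : YoungDiagram} {h g : ZMod a → ℤ}
    (hh : IsGapFunction d h) (hg : IsGapFunction e g) (hd : d.IsCore b) (he : e.IsCore b)
    {r s : ZMod a} (hrs : steps b h r = steps b g s) : h = g ∧ r = s := by
  have sum_eq : ∑ k, h (r + k * b) = ∑ k, g (s + k * b) := by
    rw [sum_add_mul_eq_sum hab, sum_add_mul_eq_sum hab]
    exact mul_left_cancel₀ two_ne_zero (hh.two_mul_sum.trans hg.two_mul_sum.symm)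
  have apply_eq : h r = g s := by
    simp only [hh.apply_add_mul hd, hg.apply_add_mul he, hrs, sum_add_distrib, sum_const,
      card_univ, ZMod.card, nsmul_eq_mul, add_left_inj] at sum_eq
    exact mul_left_cancel₀ (NeZero.ne (a : ℤ)) sum_eq
  have start_eq : r = s := by rw [← hh.cast_eq r, apply_eq, hg.cast_eq]
  subst start_eq
  refine ⟨funext fun t => ?_, rfl⟩
  obtain ⟨k, rfl⟩ := exists_add_mul_eq hab r t
  rw [hh.apply_add_mul hd, hg.apply_add_mul he, hrs, apply_eq]

lemma exists_isGapFunction_translate {h : ZMod a → ℤ} (hh : ∀ r, (h r : ZMod a) = r) :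
    ∃ (d : YoungDiagram) (c : ℤ), IsGapFunction d fun r : ZMod a => h (r + c) - c := by
  obtain ⟨M, hM⟩ := (Set.finite_range h).bddAbove
  obtain ⟨m, hm⟩ := (Set.finite_range h).bddBelow
  obtain ⟨d, c, hd⟩ := exists_mem_beads_iff_add_mem (S := {n : ℤ | n < h n})
    ⟨M, fun n hn => hn.le.trans (hM ⟨n, rfl⟩)⟩
    ⟨m, fun n hn => (hm ⟨n, rfl⟩).trans (not_lt.1 hn)⟩
  refine ⟨d, c, fun r => by simp [hh], fun n => ?_⟩
  rw [hd, Set.mem_ofPred_eq, Int.cast_add, lt_sub_iff_add_lt]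

lemma exists_steps_eq (hab : a.Coprime b) {z : ZMod a → ℕ} (hz : z ∈ piAntidiag univ b) :
    ∃ (d : YoungDiagram) (h : ZMod a → ℤ) (r : ZMod a),
      IsGapFunction d h ∧ d.IsCore b ∧ steps b h r = z := by
  have b_mul_inv := ZMod.coe_mul_inv_eq_one b hab.symm
  obtain ⟨d, c, hd⟩ := exists_isGapFunction_translate
    (h := fun r => height b z (r * (b : ZMod a)⁻¹)) fun r => by
      rw [cast_height hz, mul_right_comm, mul_assoc, b_mul_inv, mul_one]
  have step : ∀ r : ZMod a, height b z ((r + b + c) * (b : ZMod a)⁻¹)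
      = height b z ((r + c) * (b : ZMod a)⁻¹) + b - a * z ((r + c) * (b : ZMod a)⁻¹) := by
    intro r
    rw [← height_add_one hz, add_right_comm, add_mul _ (b : ZMod a), b_mul_inv]
  have core : d.IsCore b := hd.isCore_iff.2 fun r => by
    rw [step]
    have : (0 : ℤ) ≤ a * z ((r + c) * (b : ZMod a)⁻¹) := by positivity
    linarith
  refine ⟨d, _, -c, hd, core, funext fun k => ?_⟩
  have spec := hd.mul_steps core (-c) k
  have k_mul : (-c + k * b + c) * (b : ZMod a)⁻¹ = k := by
    rw [neg_add_cancel_comm, mul_assoc, b_mul_inv, mul_one]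
  rw [add_one_mul, ← add_assoc, step, k_mul] at spec
  exact Nat.cast_injective (mul_left_cancel₀ (NeZero.ne (a : ℤ)) (spec.trans (by ring)))

/-- The partitions that are both `a`-cores and `b`-cores. -/
def simultaneousCores (a b : ℕ) : Set YoungDiagram := {d | d.IsCore a ∧ d.IsCore b}

theorem bijOn_steps (hab : a.Coprime b) :
    Set.BijOn (fun p : YoungDiagram × ZMod a => steps b (firstGap a p.1) p.2)
      (simultaneousCores a b ×ˢ Set.univ) (piAntidiag univ b : Finset (ZMod a → ℕ)) := by
  refine ⟨?_, ?_, fun z hz => ?_⟩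
  · rintro ⟨d, r⟩ ⟨⟨hda, hdb⟩, -⟩
    exact (isGapFunction_firstGap hda).steps_mem_piAntidiag hdb r
  · rintro ⟨d, r⟩ ⟨⟨hda, hdb⟩, -⟩ ⟨e, s⟩ ⟨⟨hea, heb⟩, -⟩ heq
    have hd := isGapFunction_firstGap hda
    have he := isGapFunction_firstGap hea
    obtain ⟨gap_eq, rfl⟩ := hd.eq_of_steps_eq hab he hdb heb heq
    have diagram_eq : d = e := hd.diagram_eq (gap_eq ▸ he)
    rw [diagram_eq]
  · obtain ⟨d, h, r, hh, hdb, hz⟩ := exists_steps_eq hab hz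
    have hda : d.IsCore a := hh.isCore_iff.2 fun r => by simp
    exact ⟨(d, r), ⟨⟨hda, hdb⟩, trivial⟩, by simp only [hh.eq_firstGap, hz]⟩

lemma finite_simultaneousCores (hab : a.Coprime b) : (simultaneousCores a b).Finite :=
  Set.Finite.of_prod_left ((bijOn_steps hab).finite_iff_finite.2 (finite_toSet _)) Set.univ_nonempty

end Bijection

section Average

variable {a b : ℕ}

lemma sum_sum_sq_sub {ι R : Type*} [Fintype ι] [CommRing R] (f : ι → R) :
    ∑ i, ∑ j, (f j - f i) ^ 2 = 2 * Fintype.card ι * ∑ i, f i ^ 2 - 2 * (∑ i, f i) ^ 2 := by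
  simp only [sub_sq, sum_add_distrib, sum_sub_distrib, ← mul_sum, ← sum_mul, sum_const, card_univ,
    nsmul_eq_mul]
  ring

variable [NeZero a]

lemma IsGapFunction.six_mul_sum_sum_sq_sub {d : YoungDiagram} {h : ZMod a → ℤ}
    (hh : IsGapFunction d h) :
    6 * ∑ r, ∑ s, (h s - h r) ^ 2 = 24 * a ^ 2 * #d.cells + a ^ 2 * (a ^ 2 - 1) := by
  rw [sum_sum_sq_sub, ZMod.card, hh.sum_sq]
  linear_combination 2 * a * six_mul_sum_range_cast_sq a
    - 3 * (2 * ∑ r, h r + a * (a - 1)) * hh.two_mul_sum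

lemma six_mul_sum_sum_height_sq :
    6 * (a + 1) * ∑ z ∈ (piAntidiag univ b : Finset (ZMod a → ℕ)), ∑ k, height b z k ^ 2
      = a * (a ^ 2 - 1) * b * (a + b) * #(piAntidiag univ b : Finset (ZMod a → ℕ)) := by
  have height_sq : ∀ k : ZMod a, (a + 1) * ∑ z ∈ piAntidiag univ b, height b z k ^ 2
      = k.val * (a - k.val) * (b * (a + b) * #(piAntidiag univ b : Finset (ZMod a → ℕ))) := by
    intro k
    have variance := card_add_one_mul_variance_piAntidiag
      (filter_subset (fun x : ZMod a => x.val < k.val) univ) b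
    rw [card_univ, ZMod.card, card_filter_val_lt] at variance
    exact variance.trans (by ring)
  rw [sum_comm, mul_assoc, mul_sum, sum_congr rfl fun k _ => height_sq k, ← sum_mul,
    sum_zmod_val_eq_sum_range fun i => (i : ℤ) * (a - i), ← mul_assoc, six_mul_sum_range_mul_sub]
  ring

lemma sum_simultaneousCores_steps {M : Type*} [AddCommMonoid M] (hab : a.Coprime b)
    (F : (ZMod a → ℕ) → M) :
    ∑ d ∈ (finite_simultaneousCores hab).toFinset, ∑ r, F (steps b (firstGap a d) r)
      = ∑ z ∈ piAntidiag univ b, F z := by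
  have bij : Set.BijOn (fun p : YoungDiagram × ZMod a => steps b (firstGap a p.1) p.2)
      ((finite_simultaneousCores hab).toFinset ×ˢ univ : Finset (YoungDiagram × ZMod a))
      (piAntidiag univ b : Finset (ZMod a → ℕ)) := by
    simpa only [coe_product, Set.Finite.coe_toFinset, coe_univ] using bijOn_steps hab
  rw [← sum_product']
  exact sum_nbij _ bij.mapsTo bij.injOn bij.surjOn fun _ _ => rfl

lemma card_simultaneousCores_mul (hab : a.Coprime b) :
    #(finite_simultaneousCores hab).toFinset * a = #(piAntidiag univ b : Finset (ZMod a → ℕ)) := by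
  simpa using sum_simultaneousCores_steps hab fun _ => (1 : ℕ)

lemma sum_simultaneousCores_sum_sq_sub (hab : a.Coprime b) :
    ∑ d ∈ (finite_simultaneousCores hab).toFinset,
        ∑ r : ZMod a, ∑ s, (firstGap a d s - firstGap a d r) ^ 2
      = ∑ z ∈ (piAntidiag univ b : Finset (ZMod a → ℕ)), ∑ k, height b z k ^ 2 := by
  rw [← sum_simultaneousCores_steps hab]
  refine sum_congr rfl fun d hd => sum_congr rfl fun r _ => ?_
  obtain ⟨hda, hdb⟩ := (Set.Finite.mem_toFinset _).1 hd
  have hh := isGapFunction_firstGap hda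
  rw [← sum_add_mul_eq_sum hab r]
  exact sum_congr rfl fun k _ => by rw [hh.apply_add_mul hdb, add_sub_cancel_left]

theorem sum_card_cells_simultaneousCores (hab : a.Coprime b) :
    24 * ∑ d ∈ (finite_simultaneousCores hab).toFinset, (#d.cells : ℤ)
      = (a - 1) * (b - 1) * (a + b + 1) * #(finite_simultaneousCores hab).toFinset := by
  set C := (finite_simultaneousCores hab).toFinset
  have total : 6 * ∑ d ∈ C, ∑ r : ZMod a, ∑ s, (firstGap a d s - firstGap a d r) ^ 2
      = a ^ 2 * (24 * ∑ d ∈ C, (#d.cells : ℤ)) + a ^ 2 * (a ^ 2 - 1) * #C := by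
    rw [mul_sum, sum_congr rfl fun d hd =>
      (isGapFunction_firstGap ((Set.Finite.mem_toFinset _).1 hd).1).six_mul_sum_sum_sq_sub]
    rw [sum_add_distrib, ← mul_sum, sum_const, nsmul_eq_mul]
    ring
  have variance := six_mul_sum_sum_height_sq (a := a) (b := b)
  rw [← sum_simultaneousCores_sum_sq_sub hab, ← card_simultaneousCores_mul hab, Nat.cast_mul]
    at variance
  have pos : (a : ℤ) ^ 2 * (a + 1) ≠ 0 := by
    have := NeZero.pos a
    positivity
  apply mul_left_cancel₀ pos
  linear_combination variance - (a + 1) * total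

end Average

end SimultaneousCore

theorem stmt_1 (a b : ℕ) (ha : 0 < a) (hb : 0 < b) (hab : Nat.Coprime a b) :
    (∑ᶠ d ∈ {d : YoungDiagram | d.IsCore a ∧ d.IsCore b}, (d.cells.card : ℚ))
        / ({d : YoungDiagram | d.IsCore a ∧ d.IsCore b}.ncard : ℚ)
      = ((a : ℚ) - 1) * ((b : ℚ) - 1) * ((a : ℚ) + b + 1) / 24 := by
  have : NeZero a := ⟨ha.ne'⟩
  have hfin : {d : YoungDiagram | d.IsCore a ∧ d.IsCore b}.Finite :=
    SimultaneousCore.finite_simultaneousCores hab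
  have bot_mem : ⊥ ∈ {d : YoungDiagram | d.IsCore a ∧ d.IsCore b} :=
    ⟨fun c hc => absurd hc (by simp), fun c hc => absurd hc (by simp)⟩
  have card_ne_zero : (hfin.toFinset.card : ℚ) ≠ 0 :=
    Nat.cast_ne_zero.2 (Finset.card_ne_zero_of_mem (hfin.mem_toFinset.2 bot_mem))
  have total : (24 * ∑ d ∈ hfin.toFinset, (d.cells.card : ℚ))
      = (a - 1) * (b - 1) * (a + b + 1) * hfin.toFinset.card := by
    exact_mod_cast SimultaneousCore.sum_card_cells_simultaneousCores hab
  rw [finsum_mem_eq_finite_toFinset_sum _ hfin, Set.ncard_eq_toFinset_card _ hfin,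
    div_eq_iff card_ne_zero]
  linear_combination total / 24
end

section
/- The variance of the number-of-boxes statistic on plane partitions fitting inside an a×b×c box is abc(a+b+c)/12. -/
/-- A plane partition inside an `a × b × c` box: an `a × b` array of integers in
`[0, c]`, weakly decreasing along rows and columns. -/
def PlanePartitionInBox (a b c : ℕ) : Type :=
  {π : Fin a → Fin b → Fin (c + 1) //
    ∀ i i' : Fin a, ∀ j j' : Fin b, i ≤ i' → j ≤ j' → π i' j' ≤ π i j}

noncomputable instance (a b c : ℕ) : Fintype (PlanePartitionInBox a b c) := by
  unfold PlanePartitionInBox; classical infer_instance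

/-- The number of boxes of a plane partition (the sum of its entries). -/
def PlanePartitionInBox.size {a b c : ℕ} (π : PlanePartitionInBox a b c) : ℕ :=
  ∑ i : Fin a, ∑ j : Fin b, (π.1 i j : ℕ)

/-!
Reading off the diagonals of a plane partition in an `a × b × c` box gives a triangular array whose
consecutive rows interlace, with top row `0, …, b - 1, b + c, …, b + c + a - 1` once the rows are
made strict. Let `V(l)` be the Vandermonde determinant of the numbers `q ^ l i`. Row operations turn
it into the determinant of the matrix `q ^ (j * l (i + 1)) - q ^ (j * l i)`, whose entries are
geometric sums over `l i ≤ m i < l (i + 1)`. By multilinearity, `V(l)` is thus, up to a factor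
depending only on `q`, the sum of `q ^ |m| * V(m)` over all rows `m` interlacing with `l`. By
induction on the number of rows, the generating function of the arrays with top row `l` is a
multiple of `V(l)`, which gives MacMahon's product formula.

The variance read off a generating function is additive under products, and
`1 + q + ⋯ + q ^ (n - 1)` has variance `(n ^ 2 - 1) / 12`. So the variance of the number of boxes is
a sum over `x < a` and `y < b` of `((x + y + c + 1) ^ 2 - (x + y + 1) ^ 2) / 12`.
-/

open Finset Polynomial

section Vandermonde

theorem prod_univ_prod_Ioi_eq_prod_range {M : Type*} [CommMonoid M] (n : ℕ) (f : ℕ → ℕ → M) :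
    ∏ i : Fin n, ∏ j ∈ Ioi i, f i j = ∏ j ∈ range n, ∏ i ∈ range j, f i j := by
  have prod_Iio (j : Fin n) : ∏ i ∈ Iio j, f i j = ∏ i ∈ range j, f i j := by
    rw [← Nat.Iio_eq_range, ← Fin.map_valEmbedding_Iio, prod_map]
    rfl
  rw [← Fin.prod_univ_eq_prod_range (fun j ↦ ∏ i ∈ range j, f i j),
    ← Fintype.prod_congr _ _ prod_Iio]
  exact prod_comm' (by simp)

variable {R : Type*} [CommRing R]

theorem det_vandermonde_eq_prod_range (n : ℕ) (v : ℕ → R) :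
    (Matrix.vandermonde fun i : Fin n ↦ v i).det = ∏ j ∈ range n, ∏ i ∈ range j, (v j - v i) := by
  rw [Matrix.det_vandermonde, prod_univ_prod_Ioi_eq_prod_range n fun i j ↦ v j - v i]

theorem det_vandermonde_succ_eq_det_sub {n : ℕ} (v : Fin (n + 1) → R) :
    (Matrix.vandermonde v).det =
      (Matrix.of fun i j : Fin n ↦ v i.succ ^ (j + 1 : ℕ) - v i.castSucc ^ (j + 1 : ℕ)).det := by
  let B : Matrix (Fin (n + 1)) (Fin (n + 1)) R := Matrix.of <| Fin.cons (fun j ↦ v 0 ^ (j : ℕ))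
    fun i j ↦ v i.succ ^ (j : ℕ) - v i.castSucc ^ (j : ℕ)
  have det_eq : (Matrix.vandermonde v).det = B.det :=
    Matrix.det_eq_of_forall_row_eq_smul_add_pred (fun _ ↦ 1) (by simp [B]) (by simp [B])
  rw [det_eq, Matrix.det_succ_column_zero, Fin.sum_univ_succ]
  simp [B, Matrix.submatrix]

theorem det_of_sum_rows {ι α : Type*} [Fintype ι] [DecidableEq ι] (s : ι → Finset α)
    (r : ι → α → ι → R) :
    (Matrix.of fun i j ↦ ∑ x ∈ s i, r i x j).det =
      ∑ x ∈ Fintype.piFinset s, (Matrix.of fun i ↦ r i (x i)).det := by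
  have rows_eq : Matrix.of (fun i j ↦ ∑ x ∈ s i, r i x j) = fun i ↦ ∑ x ∈ s i, r i x := by
    ext i j
    simp [Finset.sum_apply]
  rw [rows_eq]
  exact Matrix.detRowAlternating.toMultilinearMap.map_sum_finset r s

end Vandermonde

section Interlacing

variable {n : ℕ}

/-- The rows `m` of length `n` that interlace with the row `l` of length `n + 1`, in the
sense that `l i ≤ m i < l (i + 1)`. -/
def interlacingRows (l : Fin (n + 1) → ℕ) : Finset (Fin n → ℕ) :=
  Fintype.piFinset fun i ↦ Ico (l i.castSucc) (l i.succ)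

theorem mem_interlacingRows {l : Fin (n + 1) → ℕ} {m : Fin n → ℕ} :
    m ∈ interlacingRows l ↔ ∀ i, l i.castSucc ≤ m i ∧ m i < l i.succ := by
  simp [interlacingRows]

theorem monotone_of_mem_interlacingRows {l : Fin (n + 1) → ℕ} (hl : Monotone l) {m : Fin n → ℕ}
    (hm : m ∈ interlacingRows l) : Monotone m := by
  rw [mem_interlacingRows] at hm
  intro i j hij
  obtain rfl | hij := hij.eq_or_lt
  · rfl
  · calc
      m i ≤ l i.succ := (hm i).2.le
      _ ≤ l j.castSucc := hl (Fin.succ_le_castSucc_iff.2 hij)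
      _ ≤ m j := (hm j).1

variable {R : Type*} [CommRing R]

theorem prod_mul_sum_interlacingRows (q : R) {l : Fin (n + 1) → ℕ} (hl : Monotone l) :
    (∏ j ∈ range n, (q ^ (j + 1) - 1)) *
        ∑ m ∈ interlacingRows l, q ^ (∑ i, m i) * (Matrix.vandermonde fun i ↦ q ^ m i).det =
      (Matrix.vandermonde fun i ↦ q ^ l i).det := by
  have geom (i j : Fin n) : (q ^ l i.succ) ^ (j + 1 : ℕ) - (q ^ l i.castSucc) ^ (j + 1 : ℕ) =
      (q ^ (j + 1 : ℕ) - 1) *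
        ∑ x ∈ Ico (l i.castSucc) (l i.succ), (q ^ (j + 1 : ℕ)) ^ x := by
    rw [mul_comm, geom_sum_Ico_mul _ (hl i.castSucc_le_succ)]
    simp only [← pow_mul, mul_comm]
  have det_row (m : Fin n → ℕ) : (Matrix.of fun i j : Fin n ↦ (q ^ (j + 1 : ℕ)) ^ m i).det =
      q ^ (∑ i, m i) * (Matrix.vandermonde fun i ↦ q ^ m i).det := by
    rw [← prod_pow_eq_pow_sum, ← Matrix.det_mul_column]
    congr 1
    ext i j
    simp only [Matrix.of_apply, Matrix.vandermonde_apply]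
    ring
  calc
    _ = (∏ j : Fin n, (q ^ (j + 1 : ℕ) - 1)) *
        (Matrix.of fun i j : Fin n ↦
          ∑ x ∈ Ico (l i.castSucc) (l i.succ), (q ^ (j + 1 : ℕ)) ^ x).det := by
      rw [det_of_sum_rows, Fin.prod_univ_eq_prod_range fun j ↦ q ^ (j + 1) - 1]
      simp only [det_row, interlacingRows]
    _ = _ := by
      rw [det_vandermonde_succ_eq_det_sub, ← Matrix.det_mul_row]
      simp only [geom, Matrix.of_apply]

end Interlacing

/-- A strict Gelfand–Tsetlin pattern with top row `l`: row `k ≤ n` has the `k` entries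
`entry k 0, …, entry k (k - 1)`, and each row interlaces with the next one, weakly on the left and
strictly on the right. As for `SemistandardYoungTableau`, all other entries are `0`, so that
patterns with the same entries are equal. -/
@[ext]
structure StrictPattern (n : ℕ) (l : Fin n → ℕ) where
  entry : ℕ → ℕ → ℕ
  entry_top : ∀ i : Fin n, entry n i = l i
  entry_succ_le : ∀ {k i}, i < k → k < n → entry (k + 1) i ≤ entry k i
  entry_lt_entry_succ : ∀ {k i}, i < k → k < n → entry k i < entry (k + 1) (i + 1)
  entry_eq_zero : ∀ {k i}, n < k ∨ k ≤ i → entry k i = 0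

namespace StrictPattern

variable {n : ℕ}

theorem entry_antitone {l : Fin n → ℕ} (p : StrictPattern n l) {k k' i : ℕ} (hik : i < k)
    (hkk' : k ≤ k') (hk' : k' ≤ n) : p.entry k' i ≤ p.entry k i := by
  induction k', hkk' using Nat.le_induction with
  | base => rfl
  | succ k' hkk' ih => exact (p.entry_succ_le (by lia) (by lia)).trans (ih (by lia))

theorem entry_add_le {l : Fin n → ℕ} (p : StrictPattern n l) {k i : ℕ} (hik : i < k) (d : ℕ)
    (hkd : k + d ≤ n) : p.entry k i + d ≤ p.entry (k + d) (i + d) := by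
  induction d with
  | zero => rfl
  | succ d ih =>
    have entry_lt := p.entry_lt_entry_succ (k := k + d) (i := i + d) (by lia) (by lia)
    have := ih (by lia)
    simp only [← add_assoc]
    lia

theorem le_entry {l : ℕ → ℕ} (p : StrictPattern n fun i ↦ l i) {k i : ℕ} (hik : i < k)
    (hk : k ≤ n) : l i ≤ p.entry k i :=
  (p.entry_top ⟨i, by lia⟩).symm.trans_le (p.entry_antitone hik hk le_rfl)

theorem entry_add_sub_le {l : ℕ → ℕ} (p : StrictPattern n fun i ↦ l i) {k i : ℕ} (hik : i < k)
    (hk : k ≤ n) : p.entry k i + (n - k) ≤ l (i + (n - k)) := by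
  have add_le := p.entry_add_le hik (n - k) (by lia)
  rwa [Nat.add_sub_of_le hk, p.entry_top ⟨i + (n - k), by lia⟩] at add_le

/-- The pattern obtained by deleting the top row. -/
def tail {l : Fin (n + 1) → ℕ} (p : StrictPattern (n + 1) l) :
    StrictPattern n fun i ↦ p.entry n i where
  entry := Function.update p.entry (n + 1) 0
  entry_top i := by simp
  entry_succ_le hik hk := by
    rw [Function.update_of_ne (by lia), Function.update_of_ne (by lia)]
    exact p.entry_succ_le hik (by lia)
  entry_lt_entry_succ hik hk := by
    rw [Function.update_of_ne (by lia), Function.update_of_ne (by lia)]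
    exact p.entry_lt_entry_succ hik (by lia)
  entry_eq_zero {k i} h := by
    obtain rfl | hk := eq_or_ne k (n + 1)
    · simp
    · rw [Function.update_of_ne hk]
      exact p.entry_eq_zero (by lia)

/-- The pattern obtained from `p` by adding a top row `l` that interlaces with the top row of
`p`. -/
def cons {l : Fin (n + 1) → ℕ} {m : Fin n → ℕ} (hm : m ∈ interlacingRows l)
    (p : StrictPattern n m) : StrictPattern (n + 1) l where
  entry := Function.update p.entry (n + 1) fun i ↦ if h : i < n + 1 then l ⟨i, h⟩ else 0
  entry_top i := by simp [Nat.le_of_lt_succ i.is_lt]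
  entry_succ_le {k i} hik hk := by
    rw [Function.update_of_ne (by lia : k ≠ n + 1)]
    obtain rfl | hk := (Nat.lt_succ_iff.1 hk).eq_or_lt
    · rw [Function.update_self, dif_pos (by lia)]
      exact ((mem_interlacingRows.1 hm ⟨i, hik⟩).1).trans_eq (p.entry_top ⟨i, hik⟩).symm
    · rw [Function.update_of_ne (by lia)]
      exact p.entry_succ_le hik hk
  entry_lt_entry_succ {k i} hik hk := by
    rw [Function.update_of_ne (by lia : k ≠ n + 1)]
    obtain rfl | hk := (Nat.lt_succ_iff.1 hk).eq_or_lt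
    · rw [Function.update_self, dif_pos (by lia)]
      exact (p.entry_top ⟨i, hik⟩).trans_lt (mem_interlacingRows.1 hm ⟨i, hik⟩).2
    · rw [Function.update_of_ne (by lia)]
      exact p.entry_lt_entry_succ hik hk
  entry_eq_zero {k i} h := by
    obtain rfl | hk := eq_or_ne k (n + 1)
    · rw [Function.update_self, dif_neg (by lia)]
    · rw [Function.update_of_ne hk]
      exact p.entry_eq_zero (by lia)

theorem row_mem_interlacingRows {l : Fin (n + 1) → ℕ} (p : StrictPattern (n + 1) l) :
    (fun i : Fin n ↦ p.entry n i) ∈ interlacingRows l := by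
  refine mem_interlacingRows.2 fun i ↦ ⟨?_, ?_⟩
  · rw [← p.entry_top]
    exact p.entry_succ_le i.is_lt n.lt_succ_self
  · rw [← p.entry_top]
    exact p.entry_lt_entry_succ i.is_lt n.lt_succ_self

theorem sigma_ext {ι : Type*} {f : ι → Fin n → ℕ} (hf : f.Injective)
    {x y : Σ m, StrictPattern n (f m)} (h : x.2.entry = y.2.entry) : x = y := by
  obtain ⟨m, p⟩ := x
  obtain ⟨m', p'⟩ := y
  obtain rfl : m = m' := hf <| funext fun i ↦ by
    rw [← p.entry_top i, ← p'.entry_top i]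
    exact congrFun₂ h n i
  exact congrArg _ (StrictPattern.ext h)

/-- A pattern amounts to its second row from the top together with the pattern below the top
row. -/
def succEquiv (l : Fin (n + 1) → ℕ) :
    StrictPattern (n + 1) l ≃ Σ m : interlacingRows l, StrictPattern n m where
  toFun p := ⟨⟨_, p.row_mem_interlacingRows⟩, p.tail⟩
  invFun x := cons x.1.2 x.2
  left_inv p := by
    ext k i
    obtain rfl | hk := eq_or_ne k (n + 1)
    · simp only [cons, Function.update_self]
      split_ifs with hi
      · exact (p.entry_top ⟨i, hi⟩).symm
      · exact (p.entry_eq_zero (by lia)).symm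
    · simp [cons, tail, hk]
  right_inv x := by
    refine sigma_ext Subtype.val_injective ?_
    have entry_zero : x.2.entry (n + 1) = 0 := funext fun i ↦ x.2.entry_eq_zero (by lia)
    simp [cons, tail, ← entry_zero]

instance (l : Fin 0 → ℕ) : Unique (StrictPattern 0 l) where
  default :=
    { entry := 0
      entry_top := by simp
      entry_succ_le := by simp
      entry_lt_entry_succ := by simp
      entry_eq_zero := by simp }
  uniq p := by
    ext k i
    exact p.entry_eq_zero (by lia)

instance fintype : ∀ {n : ℕ} (l : Fin n → ℕ), Fintype (StrictPattern n l)
  | 0, _ => Unique.fintype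
  | n + 1, l =>
    have (m : Fin n → ℕ) : Fintype (StrictPattern n m) := fintype m
    Fintype.ofEquiv _ (succEquiv l).symm

/-- The sum of the entries of a pattern. -/
def weight {l : Fin n → ℕ} (p : StrictPattern n l) : ℕ :=
  ∑ k ∈ range n, ∑ i ∈ range (k + 1), p.entry (k + 1) i

theorem weight_cons {l : Fin (n + 1) → ℕ} {m : Fin n → ℕ} (hm : m ∈ interlacingRows l)
    (p : StrictPattern n m) : (cons hm p).weight = p.weight + ∑ i, l i := by
  have sum_top : ∑ i ∈ range (n + 1), (cons hm p).entry (n + 1) i = ∑ i, l i := by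
    simp only [← Fin.sum_univ_eq_sum_range, entry_top]
  rw [weight, sum_range_succ, sum_top, weight]
  congr 1
  refine sum_congr rfl fun k hk ↦ sum_congr rfl fun i _ ↦ ?_
  exact congrFun (Function.update_of_ne (by simpa using (mem_range.1 hk).ne) _ _) i

section GeneratingFunction

variable {R : Type*} [CommRing R]

theorem sum_pow_weight_succ (q : R) (l : Fin (n + 1) → ℕ) :
    ∑ p : StrictPattern (n + 1) l, q ^ p.weight =
      q ^ (∑ i, l i) * ∑ m ∈ interlacingRows l, ∑ p : StrictPattern n m, q ^ p.weight := by
  have sum_cons (m : interlacingRows l) :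
      ∑ p : StrictPattern n m, q ^ ((succEquiv l).symm ⟨m, p⟩).weight =
        q ^ (∑ i, l i) * ∑ p : StrictPattern n m, q ^ p.weight := by
    rw [mul_sum]
    exact Fintype.sum_congr _ _ fun p ↦ by
      rw [← pow_add, add_comm _ p.weight, ← weight_cons m.2]
      rfl
  rw [← (succEquiv l).symm.sum_comp, Fintype.sum_sigma, Fintype.sum_congr _ _ sum_cons, ← mul_sum,
    sum_coe_sort _ fun m ↦ ∑ p : StrictPattern n m, q ^ p.weight]

theorem prod_mul_sum_pow_weight_eq_det (q : R) {l : Fin n → ℕ} (hl : Monotone l) :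
    (∏ k ∈ range n, ∏ j ∈ range k, (q ^ (j + 1) - 1)) * ∑ p : StrictPattern n l, q ^ p.weight =
      q ^ (∑ i, l i) * (Matrix.vandermonde fun i ↦ q ^ l i).det := by
  induction n with
  | zero => simp [weight]
  | succ n ih =>
    rw [sum_pow_weight_succ, ← prod_mul_sum_interlacingRows q hl, prod_range_succ, mul_left_comm]
    congr 1
    rw [mul_comm (∏ k ∈ range n, _), mul_assoc, mul_sum]
    congr 1
    exact sum_congr rfl fun m hm ↦ ih (monotone_of_mem_interlacingRows hl hm)

theorem prod_mul_sum_pow_weight (q : R) {l : ℕ → ℕ} (hl : Monotone l) :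
    (∏ k ∈ range n, ∏ i ∈ range k, (q ^ (k - i) - 1)) *
        ∑ p : StrictPattern n fun i ↦ l i, q ^ p.weight =
      q ^ (∑ k ∈ range n, ∑ i ∈ range (k + 1), l i) *
        ∏ k ∈ range n, ∏ i ∈ range k, (q ^ (l k - l i) - 1) := by
  have prod_reflect (k : ℕ) :
      ∏ i ∈ range k, (q ^ (k - i) - 1) = ∏ j ∈ range k, (q ^ (j + 1) - 1) := by
    rw [← prod_range_reflect]
    refine prod_congr rfl fun i hi ↦ ?_
    rw [mem_range] at hi
    rw [show k - (k - 1 - i) = i + 1 by lia]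
  have sub_factor (k i : ℕ) (hi : i ∈ range k) :
      q ^ l k - q ^ l i = q ^ l i * (q ^ (l k - l i) - 1) := by
    rw [mul_sub, mul_one, pow_mul_pow_sub _ (hl (mem_range.1 hi).le)]
  simp only [prod_reflect]
  rw [prod_mul_sum_pow_weight_eq_det q fun i j hij ↦ hl hij,
    det_vandermonde_eq_prod_range n fun i ↦ q ^ l i, Fin.sum_univ_eq_sum_range l,
    prod_congr rfl fun k _ ↦ prod_congr rfl (sub_factor k)]
  simp only [prod_mul_distrib, prod_pow_eq_pow_sum, sum_range_succ, sum_add_distrib]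
  ring

end GeneratingFunction

end StrictPattern

/-- The top row `0, …, b - 1, b + c, b + c + 1, …` of the patterns that encode plane partitions in
a box of width `b` and height `c`. -/
def boxRow (b c : ℕ) (i : ℕ) : ℕ :=
  i + if i < b then 0 else c

theorem strictMono_boxRow (b c : ℕ) : StrictMono (boxRow b c) := by
  intro i j hij
  unfold boxRow
  split_ifs <;> lia

theorem boxRow_of_lt {b i : ℕ} (c : ℕ) (hi : i < b) : boxRow b c i = i := by
  simp [boxRow, hi]

theorem boxRow_of_le {b i : ℕ} (c : ℕ) (hi : b ≤ i) : boxRow b c i = i + c := by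
  simp [boxRow, hi.not_gt]

theorem boxRow_le (b c i : ℕ) : boxRow b c i ≤ i + c := by
  unfold boxRow
  split_ifs <;> lia

namespace PlanePartitionInBox

variable {a b c : ℕ}

/-- The entries of a plane partition, extended by `0` outside of the box. -/
def entry (π : PlanePartitionInBox a b c) (x y : ℕ) : ℕ :=
  if h : x < a ∧ y < b then (π.1 ⟨x, h.1⟩ ⟨y, h.2⟩ : ℕ) else 0

theorem entry_fin (π : PlanePartitionInBox a b c) (x : Fin a) (y : Fin b) :
    π.entry x y = π.1 x y := by
  simp [entry]

theorem entry_eq_zero (π : PlanePartitionInBox a b c) {x : ℕ} (hx : a ≤ x) (y : ℕ) :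
    π.entry x y = 0 :=
  dif_neg (by lia)

theorem entry_le (π : PlanePartitionInBox a b c) (x y : ℕ) : π.entry x y ≤ c := by
  unfold entry
  split_ifs
  · exact Nat.lt_succ_iff.1 (Fin.is_lt _)
  · exact Nat.zero_le c

theorem entry_antitone (π : PlanePartitionInBox a b c) {x x' y y' : ℕ} (hx : x ≤ x')
    (hy : y ≤ y') : π.entry x' y' ≤ π.entry x y := by
  unfold entry
  split_ifs
  · exact π.2 _ _ _ _ hx hy
  · lia
  · exact Nat.zero_le _
  · rfl

theorem size_eq_sum_range (π : PlanePartitionInBox a b c) :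
    π.size = ∑ y ∈ range b, ∑ x ∈ range a, π.entry x y := by
  rw [sum_comm, size, ← Fin.sum_univ_eq_sum_range fun x ↦ ∑ y ∈ range b, π.entry x y]
  refine Fintype.sum_congr _ _ fun x ↦ ?_
  simp only [← Fin.sum_univ_eq_sum_range (π.entry x), entry_fin]

/-- The pattern whose row `k` is the diagonal `x - y = k - b` of a plane partition, padded by `c`
on the right and made strict by adding `i` to the entry of index `i`. -/
def toPattern (π : PlanePartitionInBox a b c) : StrictPattern (b + a) fun i ↦ boxRow b c i where
  entry k i := if i < k ∧ k ≤ b + a then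
    i + (if i < b then π.entry (k - i - 1) (b - 1 - i) else c) else 0
  entry_top i := by
    rw [if_pos ⟨i.is_lt, le_rfl⟩, boxRow]
    split_ifs
    · rw [π.entry_eq_zero (by lia)]
    · rfl
  entry_succ_le {k i} hik hk := by
    have entry_anti : π.entry (k + 1 - i - 1) (b - 1 - i) ≤ π.entry (k - i - 1) (b - 1 - i) :=
      π.entry_antitone (by lia) le_rfl
    rw [if_pos (by lia : i < k + 1 ∧ k + 1 ≤ b + a), if_pos (by lia : i < k ∧ k ≤ b + a)]
    split_ifs <;> lia
  entry_lt_entry_succ {k i} hik hk := by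
    have entry_anti :
        π.entry (k - i - 1) (b - 1 - i) ≤ π.entry (k + 1 - (i + 1) - 1) (b - 1 - (i + 1)) :=
      π.entry_antitone (by lia) (by lia)
    have entry_le := π.entry_le (k - i - 1) (b - 1 - i)
    rw [if_pos (by lia : i < k ∧ k ≤ b + a), if_pos (by lia : i + 1 < k + 1 ∧ k + 1 ≤ b + a)]
    split_ifs <;> lia
  entry_eq_zero h := if_neg (by lia)

theorem entry_toPattern (π : PlanePartitionInBox a b c) {k i : ℕ} (hik : i < k) (hk : k ≤ b + a) :
    π.toPattern.entry k i = i + if i < b then π.entry (k - i - 1) (b - 1 - i) else c :=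
  if_pos ⟨hik, hk⟩

/-- The plane partition whose diagonals are the rows of a pattern; this is the inverse of
`PlanePartitionInBox.toPattern`. -/
def ofPattern (p : StrictPattern (b + a) fun i ↦ boxRow b c i) : PlanePartitionInBox a b c :=
  ⟨fun x y ↦ ⟨p.entry (x + b - y) (b - 1 - y) - (b - 1 - y), by
    have add_le := p.entry_add_sub_le (k := x + b - y) (i := b - 1 - y) (by lia) (by lia)
    have le_add := boxRow_le b c (b - 1 - y + (b + a - (x + b - y)))
    lia⟩, by
    intro x x' y y' hx hy
    rw [Fin.le_def] at hx hy
    have antitone := p.entry_antitone (k := x + b - y') (k' := x' + b - y') (i := b - 1 - y')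
      (by lia) (by lia) (by lia)
    have add_le := p.entry_add_le (k := x + b - y') (i := b - 1 - y') (by lia) (y' - y) (by lia)
    rw [show (x : ℕ) + b - y' + (y' - y) = x + b - y by lia,
      show b - 1 - (y' : ℕ) + (y' - y) = b - 1 - y by lia] at add_le
    simp only [Fin.mk_le_mk]
    lia⟩

theorem entry_ofPattern (p : StrictPattern (b + a) fun i ↦ boxRow b c i) {x y : ℕ} (hx : x < a)
    (hy : y < b) :
    (ofPattern p).entry x y = p.entry (x + b - y) (b - 1 - y) - (b - 1 - y) :=
  dif_pos ⟨hx, hy⟩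

theorem toPattern_ofPattern (p : StrictPattern (b + a) fun i ↦ boxRow b c i) :
    (ofPattern p).toPattern = p := by
  ext k i
  by_cases hik : i < k ∧ k ≤ b + a
  swap
  · rw [StrictPattern.entry_eq_zero _ (by lia), p.entry_eq_zero (by lia)]
  obtain ⟨hik, hk⟩ := hik
  have lower := p.le_entry hik hk
  have upper := p.entry_add_sub_le hik hk
  rw [entry_toPattern _ hik hk]
  split_ifs with hi
  · obtain hx | hx := lt_or_ge (k - i - 1) a
    · rw [entry_ofPattern p hx (by lia), show k - i - 1 + b - (b - 1 - i) = k by lia,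
        show b - 1 - (b - 1 - i) = i by lia]
      rw [boxRow_of_lt c hi] at lower
      lia
    · rw [boxRow_of_lt c hi] at lower
      rw [boxRow_of_lt c (by lia)] at upper
      rw [entry_eq_zero _ hx]
      lia
  · rw [boxRow_of_le c (by lia)] at lower upper
    lia

theorem ofPattern_toPattern (π : PlanePartitionInBox a b c) : ofPattern π.toPattern = π := by
  refine Subtype.ext <| funext₂ fun x y ↦ Fin.ext ?_
  rw [← entry_fin, ← entry_fin, entry_ofPattern _ x.is_lt y.is_lt,
    entry_toPattern _ (by lia) (by lia), if_pos (by lia), Nat.add_sub_cancel_left]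
  congr 1 <;> lia

/-- Plane partitions in a box correspond to strict patterns by reading off the diagonals. -/
def equivPattern (a b c : ℕ) :
    PlanePartitionInBox a b c ≃ StrictPattern (b + a) fun i ↦ boxRow b c i where
  toFun := toPattern
  invFun := ofPattern
  left_inv := ofPattern_toPattern
  right_inv := toPattern_ofPattern

theorem weight_toPattern (π : PlanePartitionInBox a b c) :
    π.toPattern.weight =
      (∑ k ∈ range (b + a), ∑ i ∈ range (k + 1), boxRow b c i) + π.size := by
  let shifted (i x : ℕ) : ℕ := if i < b then π.entry x (b - 1 - i) else 0
  have entry_eq {k i : ℕ} (hk : k ∈ range (b + a)) (hi : i ∈ range (k + 1)) :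
      π.toPattern.entry (k + 1) i = boxRow b c i + shifted i (k - i) := by
    rw [mem_range] at hk hi
    rw [entry_toPattern _ hi hk, boxRow, show k + 1 - i - 1 = k - i by lia]
    simp only [shifted]
    split_ifs <;> lia
  have sum_shifted {i : ℕ} (hi : i ∈ range b) :
      ∑ x ∈ range (b + a - i), shifted i x = ∑ x ∈ range a, π.entry x (b - 1 - i) := by
    rw [mem_range] at hi
    simp only [shifted, hi, if_true]
    refine (sum_subset (range_mono (by lia)) fun x _ hx ↦ ?_).symm
    exact π.entry_eq_zero (by simpa using hx) _
  have sum_shifted_eq_zero (i : ℕ) : ∑ x ∈ range (b + a - (b + i)), shifted (b + i) x = 0 := by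
    simp [shifted]
  rw [StrictPattern.weight, sum_congr rfl fun k hk ↦ sum_congr rfl fun i hi ↦ entry_eq hk hi]
  simp only [sum_add_distrib]
  congr 1
  rw [sum_range_diag_flip, sum_range_add, sum_congr rfl fun i hi ↦ sum_shifted hi]
  simp only [sum_shifted_eq_zero, sum_const_zero, add_zero]
  rw [sum_range_reflect fun y ↦ ∑ x ∈ range a, π.entry x y, ← size_eq_sum_range]

end PlanePartitionInBox

theorem prod_prod_range_add {M : Type*} [CommMonoid M] (a b : ℕ) (f : ℕ → ℕ → M) :
    ∏ k ∈ range (b + a), ∏ i ∈ range k, f k i =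
      ((∏ k ∈ range b, ∏ i ∈ range k, f k i) * ∏ x ∈ range a, ∏ i ∈ range x, f (b + x) (b + i)) *
        ∏ x ∈ range a, ∏ y ∈ range b, f (b + x) y := by
  simp only [prod_range_add, prod_mul_distrib]
  rw [mul_right_comm, mul_assoc]

theorem prod_pow_sub_one_eq_prod_geom_sum {R : Type*} [CommRing R] (q : R) (a b d : ℕ) :
    ∏ x ∈ range a, ∏ y ∈ range b, (q ^ (b + x + d - y) - 1) =
      (∏ _x ∈ range a, ∏ _y ∈ range b, (q - 1)) *
        ∏ x ∈ range a, ∏ y ∈ range b, ∑ i ∈ range (x + y + d + 1), q ^ i := by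
  simp only [← prod_mul_distrib, mul_geom_sum]
  refine prod_congr rfl fun x _ ↦ ?_
  rw [← prod_range_reflect]
  refine prod_congr rfl fun y hy ↦ ?_
  rw [mem_range] at hy
  rw [show b + x + d - (b - 1 - y) = x + y + d + 1 by lia]

namespace PlanePartitionInBox

theorem sum_pow_weight_boxRow {R : Type*} [CommRing R] (q : R) (a b c : ℕ) :
    ∑ p : StrictPattern (b + a) fun i ↦ boxRow b c i, q ^ p.weight =
      q ^ (∑ k ∈ range (b + a), ∑ i ∈ range (k + 1), boxRow b c i) *
        ∑ π : PlanePartitionInBox a b c, q ^ π.size := by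
  rw [← (equivPattern a b c).sum_comp, mul_sum]
  exact Fintype.sum_congr _ _ fun π ↦ by rw [← pow_add, ← weight_toPattern]; rfl

theorem prod_sub_one_mul_sum_pow_size {R : Type*} [CommRing R] [IsDomain R] {q : R}
    (hq : q ≠ 0) (hq_pow : ∀ n ≠ 0, q ^ n ≠ 1) (a b c : ℕ) :
    (∏ x ∈ range a, ∏ y ∈ range b, (q ^ (b + x - y) - 1)) *
        ∑ π : PlanePartitionInBox a b c, q ^ π.size =
      ∏ x ∈ range a, ∏ y ∈ range b, (q ^ (b + x + c - y) - 1) := by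
  let triangle (m : ℕ) : R := ∏ k ∈ range m, ∏ i ∈ range k, (q ^ (k - i) - 1)
  have triangle_ne_zero (m : ℕ) : triangle m ≠ 0 :=
    prod_ne_zero_iff.2 fun k _ ↦ prod_ne_zero_iff.2 fun i hi ↦
      sub_ne_zero.2 <| hq_pow _ (Nat.sub_pos_of_lt (mem_range.1 hi)).ne'
  have split_indices : ∏ k ∈ range (b + a), ∏ i ∈ range k, (q ^ (k - i) - 1) =
      triangle b * triangle a * ∏ x ∈ range a, ∏ y ∈ range b, (q ^ (b + x - y) - 1) := by
    simp only [prod_prod_range_add, Nat.add_sub_add_left, triangle]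
  have split_row :
      ∏ k ∈ range (b + a), ∏ i ∈ range k, (q ^ (boxRow b c k - boxRow b c i) - 1) =
        triangle b * triangle a *
          ∏ x ∈ range a, ∏ y ∈ range b, (q ^ (b + x + c - y) - 1) := by
    rw [prod_prod_range_add]
    refine congrArg₂ _ (congrArg₂ _ ?_ ?_) ?_
    · refine prod_congr rfl fun k hk ↦ prod_congr rfl fun i hi ↦ ?_
      rw [mem_range] at hk hi
      rw [boxRow_of_lt c hk, boxRow_of_lt c (hi.trans hk)]
    · refine prod_congr rfl fun x _ ↦ prod_congr rfl fun i _ ↦ ?_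
      rw [boxRow_of_le c (by lia), boxRow_of_le c (by lia), Nat.add_sub_add_right,
        Nat.add_sub_add_left]
    · refine prod_congr rfl fun x _ ↦ prod_congr rfl fun y hy ↦ ?_
      rw [boxRow_of_le c (by lia), boxRow_of_lt c (mem_range.1 hy)]
  have product_formula :=
    StrictPattern.prod_mul_sum_pow_weight (n := b + a) q (strictMono_boxRow b c).monotone
  rw [sum_pow_weight_boxRow, split_indices, split_row, mul_left_comm, mul_assoc] at product_formula
  exact mul_left_cancel₀ (mul_ne_zero (triangle_ne_zero b) (triangle_ne_zero a))
    (mul_left_cancel₀ (pow_ne_zero _ hq) product_formula)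

/-- The MacMahon formula: the product over `k` in its usual form telescopes to the ratio of
`1 + q + ⋯ + q ^ (x + y + c)` to `1 + q + ⋯ + q ^ (x + y)`. -/
theorem prod_geom_sum_mul_sum_pow_size {R : Type*} [CommRing R] (q : R) (a b c : ℕ) :
    (∏ x ∈ range a, ∏ y ∈ range b, ∑ i ∈ range (x + y + 1), q ^ i) *
        ∑ π : PlanePartitionInBox a b c, q ^ π.size =
      ∏ x ∈ range a, ∏ y ∈ range b, ∑ i ∈ range (x + y + c + 1), q ^ i := by
  suffices formula_X : (∏ x ∈ range a, ∏ y ∈ range b, ∑ i ∈ range (x + y + 1), (X : ℤ[X]) ^ i) *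
        ∑ π : PlanePartitionInBox a b c, X ^ π.size =
      ∏ x ∈ range a, ∏ y ∈ range b, ∑ i ∈ range (x + y + c + 1), X ^ i by
    simpa only [map_mul, map_prod, map_sum, map_pow, aeval_X] using congrArg (aeval q) formula_X
  have X_pow_ne_one (n : ℕ) (hn : n ≠ 0) : (X : ℤ[X]) ^ n ≠ 1 := fun h ↦
    hn <| by simpa using congrArg natDegree h
  have formula := prod_sub_one_mul_sum_pow_size X_ne_zero X_pow_ne_one a b c
  have denominator := prod_pow_sub_one_eq_prod_geom_sum (X : ℤ[X]) a b 0
  simp only [add_zero] at denominator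
  rw [denominator, prod_pow_sub_one_eq_prod_geom_sum, mul_assoc] at formula
  refine mul_left_cancel₀ ?_ formula
  exact prod_ne_zero_iff.2 fun _ _ ↦ prod_ne_zero_iff.2 fun _ _ ↦ X_sub_C_ne_zero 1

end PlanePartitionInBox

section Variance

variable {K : Type*} [Field K]

/-- The variance of the distribution on `ℕ` in which `m` has probability proportional to the
coefficient of `X ^ m` in `F`, computed from the factorial moments of `F`. It is meaningful only if
`F.eval 1 ≠ 0`. -/
noncomputable def pgfVariance (F : K[X]) : K :=
  ((derivative (derivative F)).eval 1 + (derivative F).eval 1) / F.eval 1 -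
    ((derivative F).eval 1 / F.eval 1) ^ 2

theorem pgfVariance_mul {F G : K[X]} (hF : F.eval 1 ≠ 0) (hG : G.eval 1 ≠ 0) :
    pgfVariance (F * G) = pgfVariance F + pgfVariance G := by
  simp only [pgfVariance, derivative_mul, derivative_add, eval_add, eval_mul]
  field_simp
  ring

theorem pgfVariance_prod {ι : Type*} {s : Finset ι} {F : ι → K[X]}
    (hF : ∀ i ∈ s, (F i).eval 1 ≠ 0) :
    pgfVariance (∏ i ∈ s, F i) = ∑ i ∈ s, pgfVariance (F i) := by
  induction s using Finset.cons_induction with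
  | empty => simp [pgfVariance]
  | cons i s hi ih =>
    rw [forall_mem_cons] at hF
    have eval_prod_ne_zero : (∏ j ∈ s, F j).eval 1 ≠ 0 := by
      rw [eval_prod]
      exact prod_ne_zero_iff.2 hF.2
    rw [prod_cons, sum_cons, pgfVariance_mul hF.1 eval_prod_ne_zero, ih hF.2]

theorem pgfVariance_sum_X_pow {ι : Type*} (s : Finset ι) (w : ι → ℕ) :
    pgfVariance (∑ i ∈ s, X ^ w i) =
      (∑ i ∈ s, (w i : K) ^ 2) / s.card - ((∑ i ∈ s, (w i : K)) / s.card) ^ 2 := by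
  have sq_eq (n : ℕ) : (n : K) ^ 2 = n * ((n - 1 : ℕ) : K) + n := by
    cases n with
    | zero => simp
    | succ n => rw [Nat.add_sub_cancel]; push_cast; ring
  simp [pgfVariance, eval_finsetSum, derivative_X_pow, sq_eq, sum_add_distrib]

theorem pgfVariance_geom_sum [CharZero K] {n : ℕ} (hn : n ≠ 0) :
    pgfVariance (∑ i ∈ range n, (X : K[X]) ^ i) = ((n : K) ^ 2 - 1) / 12 := by
  have sum_id (m : ℕ) : ∑ i ∈ range m, (i : K) = m * (m - 1) / 2 := by
    induction m with
    | zero => simp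
    | succ m ih => rw [sum_range_succ, ih]; push_cast; ring
  have sum_sq (m : ℕ) : ∑ i ∈ range m, (i : K) ^ 2 = m * (m - 1) * (2 * m - 1) / 6 := by
    induction m with
    | zero => simp
    | succ m ih => rw [sum_range_succ, ih]; push_cast; ring
  rw [pgfVariance_sum_X_pow, sum_id, sum_sq, card_range]
  field_simp
  ring

theorem eval_one_geom_sum_ne_zero [CharZero K] {n : ℕ} (hn : n ≠ 0) :
    (∑ i ∈ range n, (X : K[X]) ^ i).eval 1 ≠ 0 := by
  simpa [eval_finsetSum] using hn

theorem eval_one_prod_geom_sum_ne_zero [CharZero K] {ι : Type*} {s : Finset ι} {n : ι → ℕ}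
    (hn : ∀ i ∈ s, n i ≠ 0) :
    (∏ i ∈ s, ∑ j ∈ range (n i), (X : K[X]) ^ j).eval 1 ≠ 0 := by
  rw [eval_prod]
  exact prod_ne_zero_iff.2 fun i hi ↦ eval_one_geom_sum_ne_zero (hn i hi)

theorem pgfVariance_prod_geom_sum [CharZero K] {ι : Type*} {s : Finset ι} {n : ι → ℕ}
    (hn : ∀ i ∈ s, n i ≠ 0) :
    pgfVariance (∏ i ∈ s, ∑ j ∈ range (n i), (X : K[X]) ^ j) =
      ∑ i ∈ s, ((n i : K) ^ 2 - 1) / 12 := by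
  rw [pgfVariance_prod fun i hi ↦ eval_one_geom_sum_ne_zero (hn i hi)]
  exact sum_congr rfl fun i hi ↦ pgfVariance_geom_sum (hn i hi)

end Variance

theorem sum_sq_sub_one_div_twelve_sub {K : Type*} [Field K] [CharZero K] (a b c : ℕ) :
    ∑ z ∈ range a ×ˢ range b,
        ((((z.1 + z.2 + c + 1 : ℕ) : K) ^ 2 - 1) / 12 - (((z.1 + z.2 + 1 : ℕ) : K) ^ 2 - 1) / 12) =
      (a : K) * b * c * (a + b + c) / 12 := by
  have sum_odd (n : ℕ) : ∑ i ∈ range n, (2 * (i : K) + 1) = (n : K) ^ 2 := by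
    induction n with
    | zero => simp
    | succ n ih => rw [sum_range_succ, ih]; push_cast; ring
  have difference (x y : ℕ) :
      (((x + y + c + 1 : ℕ) : K) ^ 2 - 1) / 12 - (((x + y + 1 : ℕ) : K) ^ 2 - 1) / 12 =
        c / 12 * (c + (2 * x + 1) + (2 * y + 1)) := by
    push_cast
    ring
  have sum_row (x : ℕ) : ∑ y ∈ range b, (c + (2 * (x : K) + 1) + (2 * (y : K) + 1)) =
      b * (c + b) + b * (2 * x + 1) := by
    rw [sum_add_distrib, sum_odd, sum_const, card_range, nsmul_eq_mul]
    ring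
  simp only [difference, ← mul_sum, sum_product, sum_row]
  rw [sum_add_distrib, sum_const, ← mul_sum, sum_odd, card_range, nsmul_eq_mul]
  ring

namespace PlanePartitionInBox

theorem pgfVariance_sum_X_pow_size {K : Type*} [Field K] [CharZero K] (a b c : ℕ) :
    pgfVariance (∑ π : PlanePartitionInBox a b c, (X : K[X]) ^ π.size) =
      (a : K) * b * c * (a + b + c) / 12 := by
  have macMahon := prod_geom_sum_mul_sum_pow_size (X : K[X]) a b c
  simp only [← prod_product'] at macMahon
  have numerator_ne_zero : eval 1 (∏ z ∈ range a ×ˢ range b,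
      ∑ i ∈ range (z.1 + z.2 + c + 1), (X : K[X]) ^ i) ≠ 0 :=
    eval_one_prod_geom_sum_ne_zero fun z _ ↦ (z.1 + z.2 + c).succ_ne_zero
  have variance_eq := congrArg pgfVariance macMahon
  rw [← macMahon, eval_mul, mul_ne_zero_iff] at numerator_ne_zero
  rw [pgfVariance_mul numerator_ne_zero.1 numerator_ne_zero.2,
    pgfVariance_prod_geom_sum fun z _ ↦ (z.1 + z.2).succ_ne_zero,
    pgfVariance_prod_geom_sum fun z _ ↦ (z.1 + z.2 + c).succ_ne_zero] at variance_eq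
  rw [← sum_sq_sub_one_div_twelve_sub, sum_sub_distrib]
  exact eq_sub_of_add_eq' variance_eq

end PlanePartitionInBox

theorem stmt_10 (a b c : ℕ) (ha : 0 < a) (hb : 0 < b) (hc : 0 < c) :
    (∑ π : PlanePartitionInBox a b c, (π.size : ℚ) ^ 2)
        / (Fintype.card (PlanePartitionInBox a b c) : ℚ)
      - ((∑ π : PlanePartitionInBox a b c, (π.size : ℚ))
          / (Fintype.card (PlanePartitionInBox a b c) : ℚ)) ^ 2
      = (a : ℚ) * b * c * ((a : ℚ) + b + c) / 12 := by
  rw [← PlanePartitionInBox.pgfVariance_sum_X_pow_size, pgfVariance_sum_X_pow, card_univ]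
end
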